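/- Suppose X ~ N_n(θ₀, I_n) and consider the one-group shrinkage prior with 1/2 ≤ a < 1 applied independently to each coordinate. Let (p_n) be a sequence with p_n → ∞ and p_n = o(n), fix α ≥ 1, and set τ_n = (p_n/n)^α. Then for every sequence M_n → ∞, sup_{θ₀ ∈ l₀[p_n]} E_{θ₀} Π( θ ∈ ℝⁿ : ||θ − θ₀||² > M_n p_n log(n/p_n) | X ) → 0 as n → ∞. -/

import Mathlib

open MeasureTheory Filter Set

noncomputable section

namespace OneGroup

/-- A one-group (global-local) shrinkage prior: the local variance `λ²` has density
`π(λ²) = K (λ²)^{-a-1} L(λ²)` on `(0,∞)`, where `L` is a positive, measurable,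
non-constant slowly varying function, bounded above by `M`, and bounded below by
`c₀` on `[t₀, ∞)`. -/
structure Prior where
  K : ℝ
  a : ℝ
  L : ℝ → ℝ
  M : ℝ
  c₀ : ℝ
  t₀ : ℝ
  K_pos : 0 < K
  a_pos : 0 < a
  L_pos : ∀ t : ℝ, 0 < t → 0 < L t
  L_meas : Measurable L
  L_slow : ∀ c : ℝ, 0 < c → Tendsto (fun t => L (c * t) / L t) atTop (nhds 1)
  L_nonconst : ∃ s : ℝ, 0 < s ∧ ∃ t : ℝ, 0 < t ∧ L s ≠ L t
  M_pos : 0 < M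
  L_le : ∀ t : ℝ, 0 < t → L t ≤ M
  c₀_pos : 0 < c₀
  t₀_pos : 0 < t₀
  L_ge : ∀ t : ℝ, t₀ ≤ t → c₀ ≤ L t

/-- The (unnormalized) posterior weight, as a function of `t = λ²`, entering all
posterior expectations of functions of the shrinkage coefficient `κ = 1/(1+tτ²)`. -/
def wt (P : Prior) (x τ t : ℝ) : ℝ :=
  (1 + t * τ ^ 2) ^ (-(1:ℝ)/2) * t ^ (-P.a - 1) * P.L t *
    Real.exp (-x ^ 2 / (2 * (1 + t * τ ^ 2)))

/-- Posterior expectation `E(g(κ) | x, τ)` of a function `g` of the shrinkage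
coefficient `κ = 1/(1+λ²τ²)`. -/
def postExp (P : Prior) (g : ℝ → ℝ) (x τ : ℝ) : ℝ :=
  (∫ t in Ioi (0:ℝ), g (1 / (1 + t * τ ^ 2)) * wt P x τ t) /
    (∫ t in Ioi (0:ℝ), wt P x τ t)

/-- The posterior mean `T_τ(x) = x (1 - E(κ | x, τ))`. -/
def T (P : Prior) (τ x : ℝ) : ℝ := x * (1 - postExp P (fun κ => κ) x τ)

/-- The marginal prior density `p_τ(θ)` of `θ`. -/
def pdens (P : Prior) (τ θ : ℝ) : ℝ :=
  ∫ u in Ioi (0:ℝ),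
    (Real.sqrt (2 * Real.pi * u * τ ^ 2))⁻¹ * Real.exp (-θ ^ 2 / (2 * u * τ ^ 2)) *
      (P.K * u ^ (-P.a - 1) * P.L u)

/-- The unnormalized posterior density of `θ` given an observation `x ~ N(θ,1)`. -/
def postw (P : Prior) (τ x θ : ℝ) : ℝ := Real.exp (-(x - θ) ^ 2 / 2) * pdens P τ θ

/-- The `k`-th posterior moment of `θ` given `x`. -/
def postMoment (P : Prior) (τ x : ℝ) (k : ℕ) : ℝ :=
  (∫ θ : ℝ, θ ^ k * postw P τ x θ) / (∫ θ : ℝ, postw P τ x θ)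

/-- The posterior variance `Var(θ | x)`. -/
def postVar (P : Prior) (τ x : ℝ) : ℝ := postMoment P τ x 2 - (postMoment P τ x 1) ^ 2

/-- The standard normal density. -/
def gauss (z : ℝ) : ℝ := (Real.sqrt (2 * Real.pi))⁻¹ * Real.exp (-z ^ 2 / 2)

/-- Expectation of `f(X)` for `X ~ N(θ, 1)`. -/
def E1 (θ : ℝ) (f : ℝ → ℝ) : ℝ := ∫ x : ℝ, f x * gauss (x - θ)

/-- Expectation of `f(X)` for `X ~ N_n(θ, I_n)`. -/
def EN (n : ℕ) (θ : Fin n → ℝ) (f : (Fin n → ℝ) → ℝ) : ℝ :=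
  ∫ x : Fin n → ℝ, f x * ∏ i, gauss (x i - θ i)

/-- The posterior probability `Π(A | x)` of a set `A ⊆ ℝⁿ` given data `x`,
for the coordinatewise-independent posterior. -/
def postProb (P : Prior) (τ : ℝ) {n : ℕ} (x : Fin n → ℝ) (A : Set (Fin n → ℝ)) : ℝ :=
  (∫ θ in A, ∏ i, postw P τ (x i) (θ i)) /
    (∫ θ : Fin n → ℝ, ∏ i, postw P τ (x i) (θ i))

/-- The set `l₀[p]` of nearly black vectors in `ℝⁿ`. -/
def nearlyBlack (n p : ℕ) : Set (Fin n → ℝ) :=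
  {θ | (Finset.univ.filter fun i => θ i ≠ 0).card ≤ p}

end OneGroup

open OneGroup

/-!
By Markov's inequality the posterior probability is at most `(M_n p_n log (n / p_n))⁻¹` times the
sum over the coordinates of the posterior mean squared errors, so the expectation of each of these
has to be bounded. Given `λ²` and `x`, the law of `θ` is `N((1 - κ) x, 1 - κ)` with
`κ = 1 / (1 + λ²τ²)`, which turns the risk of a coordinate into a posterior expectation of a
quadratic polynomial in `κ`.

* Any coordinate costs `O(log (1 / τ))`: for `x² ≤ C log (1 / τ)` use `κ ≤ 1`, and for larger `x`
  the posterior concentrates on local variances of order `x² / τ²`, where `x² κ = O(1)`.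
* A zero coordinate costs only `O((τ²)ᵇ log (1 / τ))` for `b ≤ a`, `b < 1`, since `1 - κ` is
  integrable against `s ^ (-b - 1)` in the variable `s = λ²τ²`; beyond `x² = 16 log (1 / τ)` the
  Gaussian tail of `x` takes over.

For `τ = (p / n) ^ α` and `b = 1 / (2α)` one has `(τ²)ᵇ = p / n`, so the `n` coordinates together
cost `O(p log (n / p))`.
-/

namespace OneGroup

open ProbabilityTheory

section Analysis

lemma one_le_log_one_div {τ : ℝ} (hτ : 0 < τ) (hτe : τ ≤ Real.exp (-1)) :
    1 ≤ Real.log (1 / τ) := by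
  rw [one_div, Real.log_inv, le_neg]
  exact (Real.log_le_iff_le_exp hτ).2 hτe

lemma rpow_le_exp_neg_one {δ α : ℝ} (hδ0 : 0 ≤ δ) (hδ : δ ≤ Real.exp (-2)) (hα : 1 / 2 ≤ α) :
    δ ^ α ≤ Real.exp (-1) := by
  calc δ ^ α ≤ Real.exp (-2) ^ α := by gcongr
    _ = Real.exp (-2 * α) := (Real.exp_mul _ _).symm
    _ ≤ Real.exp (-1) := Real.exp_le_exp.2 (by linarith)

lemma sq_rpow_rpow_one_div {δ α : ℝ} (hδ : 0 ≤ δ) (hα : α ≠ 0) :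
    ((δ ^ α) ^ 2) ^ (1 / (2 * α)) = δ := by
  have hexp : α * (2 : ℕ) * (1 / (2 * α)) = 1 := by
    push_cast
    field_simp
  rw [← Real.rpow_mul_natCast hδ, ← Real.rpow_mul hδ, hexp, Real.rpow_one]

lemma rpow_mul_exp_neg_mul_le {k b z : ℝ} (hk : 0 < k) (hb : 0 < b) (hz : 0 ≤ z) :
    z ^ k * Real.exp (-(b * z)) ≤ (k / b) ^ k := by
  have hexp : (b * z / k) ^ k ≤ Real.exp (b * z) :=
    calc (b * z / k) ^ k ≤ Real.exp (b * z / k) ^ k :=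
          Real.rpow_le_rpow (by positivity) (by linarith [Real.add_one_le_exp (b * z / k)]) hk.le
      _ = Real.exp (b * z) := by rw [← Real.exp_mul, div_mul_cancel₀ _ hk.ne']
  have hsplit : z ^ k = (k / b) ^ k * (b * z / k) ^ k := by
    rw [← Real.mul_rpow (by positivity) (by positivity)]
    congr 1
    field_simp
  rw [hsplit, Real.exp_neg, mul_assoc]
  exact mul_le_of_le_one_right (by positivity) (mul_inv_le_one_of_le₀ hexp (Real.exp_pos _).le)

lemma integral_rpow_mul_exp_neg_div_Ioi {s b : ℝ} (hs : 0 < s) (hb : 0 < b) :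
    ∫ u in Ioi (0 : ℝ), u ^ (-s - 1) * Real.exp (-(b / u)) = b ^ (-s) * Real.Gamma s := by
  rw [Real.rpow_neg hb.le, ← Real.inv_rpow hb.le, ← one_div,
    ← Real.integral_rpow_mul_exp_neg_mul_Ioi hs hb,
    ← integral_comp_rpow_Ioi (fun t => t ^ (s - 1) * Real.exp (-(b * t)))
      (neg_ne_zero.2 one_ne_zero)]
  refine setIntegral_congr_fun measurableSet_Ioi fun u hu => ?_
  have hu : 0 < u := hu
  simp only [abs_neg, abs_one, one_mul, smul_eq_mul]
  rw [← mul_assoc, ← Real.rpow_mul hu.le, ← Real.rpow_add hu, Real.rpow_neg_one, div_eq_mul_inv]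
  ring_nf

lemma integrableOn_rpow_mul_exp_neg_div_Ioi {s b : ℝ} (hs : 0 < s) (hb : 0 < b) :
    IntegrableOn (fun u : ℝ => u ^ (-s - 1) * Real.exp (-(b / u))) (Ioi 0) := by
  refine .of_integral_ne_zero ?_
  rw [integral_rpow_mul_exp_neg_div_Ioi hs hb]
  exact mul_ne_zero (by positivity) (Real.Gamma_pos_of_pos hs).ne'

lemma integrableOn_one_sub_inv_one_add_mul_rpow {b : ℝ} (hb : 0 < b) (hb1 : b < 1) :
    IntegrableOn (fun s : ℝ => (1 - 1 / (1 + s)) * s ^ (-b - 1)) (Ioi 0) := by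
  have hmeas : Measurable fun s : ℝ => (1 - 1 / (1 + s)) * s ^ (-b - 1) := by fun_prop
  have hnorm {s : ℝ} (hs : 0 < s) :
      ‖(1 - 1 / (1 + s)) * s ^ (-b - 1)‖ = s / (1 + s) * s ^ (-b - 1) := by
    rw [show 1 - 1 / (1 + s) = s / (1 + s) by field_simp; ring, Real.norm_of_nonneg (by positivity)]
  rw [← Ioc_union_Ioi_eq_Ioi zero_le_one]
  refine IntegrableOn.union ?_ ?_
  · have hdom : IntegrableOn (fun s : ℝ => s ^ (-b)) (Ioc 0 1) :=
      (intervalIntegrable_iff_integrableOn_Ioc_of_le zero_le_one).1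
        (intervalIntegral.intervalIntegrable_rpow' (by linarith))
    refine hdom.mono' hmeas.aestronglyMeasurable
      ((ae_restrict_iff' measurableSet_Ioc).2 (ae_of_all _ fun s hs => ?_))
    have hs0 : 0 < s := hs.1
    calc ‖(1 - 1 / (1 + s)) * s ^ (-b - 1)‖ = s / (1 + s) * s ^ (-b - 1) := hnorm hs0
      _ ≤ s * s ^ (-b - 1) := by
        gcongr
        exact div_le_self hs0.le (by linarith)
      _ = s ^ (-b) := by rw [← Real.rpow_one_add' hs0.le (by linarith)]; ring_nf
  · refine (integrableOn_Ioi_rpow_of_lt (a := -b - 1) (by linarith) one_pos).mono'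
      hmeas.aestronglyMeasurable
      ((ae_restrict_iff' measurableSet_Ioi).2 (ae_of_all _ fun s hs => ?_))
    have hs0 : 0 < s := one_pos.trans hs
    rw [hnorm hs0]
    exact mul_le_of_le_one_left (by positivity) ((div_le_one (by linarith)).2 (by linarith))

lemma integrable_sub_sq_gaussianReal (μ c : ℝ) (v : NNReal) :
    Integrable (fun x => (x - c) ^ 2) (gaussianReal μ v) :=
  ((memLp_id_gaussianReal 2).sub (memLp_const c)).integrable_sq

lemma integral_sub_sq_gaussianReal (μ c : ℝ) (v : NNReal) :
    ∫ x, (x - c) ^ 2 ∂gaussianReal μ v = (μ - c) ^ 2 + v := by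
  have hmean : ∫ x, (x - c) ∂gaussianReal μ v = μ - c := by
    rw [integral_sub (f := fun x => x) ((memLp_id_gaussianReal 1).integrable le_rfl)
      (integrable_const c), integral_id_gaussianReal, integral_const, probReal_univ, one_smul]
  have hvar : (v : ℝ) = ∫ x, (x - c) ^ 2 ∂gaussianReal μ v - (μ - c) ^ 2 := by
    rw [← hmean, ← variance_fun_id_gaussianReal (μ := μ),
      ← variance_sub_const (X := fun x => x) aestronglyMeasurable_id c]
    exact variance_eq_sub ((memLp_id_gaussianReal 2).sub (memLp_const c))
  linarith

lemma integrable_gaussianReal_iff {μ : ℝ} {v : NNReal} (hv : v ≠ 0) {f : ℝ → ℝ} :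
    Integrable f (gaussianReal μ v) ↔ Integrable fun x => f x * gaussianPDFReal μ v x := by
  rw [gaussianReal_of_var_ne_zero _ hv, integrable_withDensity_iff_integrable_smul'
    (measurable_gaussianPDF μ v) (ae_of_all _ fun _ => gaussianPDF_lt_top)]
  simp only [toReal_gaussianPDF, smul_eq_mul, mul_comm]

lemma integral_gaussianReal_eq_integral_mul {μ : ℝ} {v : NNReal} (hv : v ≠ 0) (f : ℝ → ℝ) :
    ∫ x, f x ∂gaussianReal μ v = ∫ x, f x * gaussianPDFReal μ v x := by
  simp only [integral_gaussianReal_eq_integral_smul hv, smul_eq_mul, mul_comm]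

lemma setIntegral_lt_le_inv_mul_integral_mul {X : Type*} [MeasurableSpace X] {μ : Measure X}
    {S W : X → ℝ} (hS : 0 ≤ S) (hSm : Measurable S) (hW : 0 ≤ W) (hWi : Integrable W μ)
    (hSW : Integrable (fun x => S x * W x) μ) {r : ℝ} (hr : 0 < r) :
    ∫ x in {x | r < S x}, W x ∂μ ≤ r⁻¹ * ∫ x, S x * W x ∂μ := by
  rw [← integral_indicator (measurableSet_lt measurable_const hSm), ← integral_const_mul]
  refine integral_mono (hWi.indicator (measurableSet_lt measurable_const hSm))
    (hSW.const_mul _) (indicator_le' (fun x hx => ?_) fun x _ => ?_)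
  · rw [← mul_assoc]
    exact le_mul_of_one_le_left (hW x) ((one_le_inv_mul₀ hr).2 (le_of_lt hx))
  · exact mul_nonneg (inv_nonneg.2 hr.le) (mul_nonneg (hS x) (hW x))

end Analysis

section ProductDensity

variable {ι : Type*} [Fintype ι] {E : ι → Type*} {f h : ∀ i, E i → ℝ}

lemma mul_prod_eq_prod_update [DecidableEq ι] (i : ι) (y : ∀ i, E i) :
    h i (y i) * ∏ j, f j (y j) =
      ∏ j, Function.update f i (fun t => h i t * f i t) j (y j) := by
  rw [← Finset.mul_prod_erase Finset.univ _ (Finset.mem_univ i),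
    ← Finset.mul_prod_erase Finset.univ _ (Finset.mem_univ i), Function.update_self, mul_assoc]
  congr 2
  refine Finset.prod_congr rfl fun j hj => ?_
  rw [Function.update_of_ne (Finset.ne_of_mem_erase hj)]

variable [∀ i, MeasurableSpace (E i)] {μ : ∀ i, Measure (E i)} [∀ i, SigmaFinite (μ i)]

lemma integrable_mul_prod (hf : ∀ i, Integrable (f i) (μ i)) {i : ι}
    (hh : Integrable (fun t => h i t * f i t) (μ i)) :
    Integrable (fun y => h i (y i) * ∏ j, f j (y j)) (Measure.pi μ) := by
  classical
  simp only [mul_prod_eq_prod_update]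
  refine Integrable.fintype_prod_dep fun j => ?_
  rcases eq_or_ne j i with rfl | hj
  · rwa [Function.update_self]
  · rw [Function.update_of_ne hj]
    exact hf j

lemma integral_mul_prod (hf : ∀ i, ∫ t, f i t ∂μ i = 1) (i : ι) :
    ∫ y, h i (y i) * ∏ j, f j (y j) ∂Measure.pi μ = ∫ t, h i t * f i t ∂μ i := by
  classical
  simp only [mul_prod_eq_prod_update]
  rw [integral_fintype_prod_eq_prod, ← Finset.mul_prod_erase Finset.univ _ (Finset.mem_univ i),
    Function.update_self, Finset.prod_eq_one fun j hj => ?_, mul_one]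
  rw [Function.update_of_ne (Finset.ne_of_mem_erase hj), hf j]

lemma integrable_sum_mul_prod (hf : ∀ i, Integrable (f i) (μ i))
    (hh : ∀ i, Integrable (fun t => h i t * f i t) (μ i)) :
    Integrable (fun y => (∑ i, h i (y i)) * ∏ j, f j (y j)) (Measure.pi μ) := by
  simp only [Finset.sum_mul]
  exact integrable_finsetSum _ fun i _ => integrable_mul_prod hf (hh i)

lemma integral_sum_mul_prod (hf : ∀ i, Integrable (f i) (μ i)) (hf1 : ∀ i, ∫ t, f i t ∂μ i = 1)
    (hh : ∀ i, Integrable (fun t => h i t * f i t) (μ i)) :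
    ∫ y, (∑ i, h i (y i)) * ∏ j, f j (y j) ∂Measure.pi μ = ∑ i, ∫ t, h i t * f i t ∂μ i := by
  simp only [Finset.sum_mul]
  rw [integral_finsetSum _ fun i _ => integrable_mul_prod hf (hh i)]
  exact Finset.sum_congr rfl fun i _ => integral_mul_prod hf1 i

end ProductDensity

section Posterior

variable (P : Prior) {τ x t : ℝ}

/-- The shrinkage coefficient `κ = 1 / (1 + λ²τ²)` as a function of `t = λ²`. -/
def shrinkage (τ t : ℝ) : ℝ := 1 / (1 + t * τ ^ 2)

/-- The density of the local variance `λ²` up to its normalizing constant `K`. -/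
def Prior.mixing (t : ℝ) : ℝ := t ^ (-P.a - 1) * P.L t

/-- The local variance has a finite law. `Prior` does not ask for this: `L` may be such that
`Prior.mixing` is not integrable at `0`. -/
def Prior.Proper : Prop := IntegrableOn P.mixing (Ioi 0)

/-- The joint unnormalized density of `(λ², θ)` given the observation `x`. -/
def jointDens (τ x t θ : ℝ) : ℝ :=
  Real.exp (-(x - θ) ^ 2 / 2) * ((Real.sqrt (2 * Real.pi * t * τ ^ 2))⁻¹ *
    Real.exp (-θ ^ 2 / (2 * t * τ ^ 2)) * (P.K * t ^ (-P.a - 1) * P.L t))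

/-- The law of `θ` given the observation `x` and the local variance `λ² = t`. -/
def condPost (τ x t : ℝ) : Measure ℝ :=
  gaussianReal ((1 - shrinkage τ t) * x) (1 - shrinkage τ t).toNNReal

/-- The posterior mean of the squared error `(θ - c)²` given `x`. -/
def postRisk (τ c x : ℝ) : ℝ :=
  (∫ θ, (θ - c) ^ 2 * postw P τ x θ) / ∫ θ, postw P τ x θ

lemma shrinkage_pos (ht : 0 < t) : 0 < shrinkage τ t := by
  unfold shrinkage
  positivity

lemma shrinkage_le_one (ht : 0 < t) : shrinkage τ t ≤ 1 :=
  div_le_one_of_le₀ (le_add_of_nonneg_right (by positivity)) (by positivity)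

lemma one_sub_shrinkage_nonneg (ht : 0 < t) : 0 ≤ 1 - shrinkage τ t :=
  sub_nonneg.2 (shrinkage_le_one ht)

lemma shrinkage_mem_Icc (ht : 0 < t) : shrinkage τ t ∈ Icc (0 : ℝ) 1 :=
  ⟨(shrinkage_pos ht).le, shrinkage_le_one ht⟩

lemma one_sub_shrinkage_eq (ht : 0 < t) : 1 - shrinkage τ t = t * τ ^ 2 / (1 + t * τ ^ 2) := by
  unfold shrinkage
  field_simp
  ring

lemma measurable_shrinkage : Measurable (shrinkage τ) := by
  unfold shrinkage
  fun_prop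

lemma mixing_pos (ht : 0 < t) : 0 < P.mixing t :=
  mul_pos (Real.rpow_pos_of_pos ht _) (P.L_pos t ht)

lemma mixing_le (ht : 0 < t) : P.mixing t ≤ P.M * t ^ (-P.a - 1) := by
  rw [Prior.mixing, mul_comm]
  exact mul_le_mul_of_nonneg_right (P.L_le t ht) (by positivity)

lemma measurable_mixing : Measurable P.mixing := by
  have := P.L_meas
  unfold Prior.mixing
  fun_prop

lemma wt_eq (ht : 0 < t) :
    wt P x τ t =
      Real.sqrt (shrinkage τ t) * Real.exp (-(x ^ 2 * shrinkage τ t / 2)) * P.mixing t := by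
  have hpos : 0 < 1 + t * τ ^ 2 := by positivity
  have hsqrt : (1 + t * τ ^ 2) ^ (-(1 : ℝ) / 2) = Real.sqrt (shrinkage τ t) := by
    rw [shrinkage, Real.sqrt_eq_rpow, one_div, Real.inv_rpow hpos.le, ← Real.rpow_neg hpos.le]
    norm_num
  have hexp : -x ^ 2 / (2 * (1 + t * τ ^ 2)) = -(x ^ 2 * shrinkage τ t / 2) := by
    unfold shrinkage
    field_simp
  rw [wt, hsqrt, hexp, Prior.mixing]
  ring

lemma wt_pos (ht : 0 < t) : 0 < wt P x τ t := by
  rw [wt_eq P ht]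
  have := mixing_pos P ht
  have := shrinkage_pos (τ := τ) ht
  positivity

lemma wt_le_mixing (ht : 0 < t) : wt P x τ t ≤ P.mixing t := by
  rw [wt_eq P ht]
  have := shrinkage_pos (τ := τ) ht
  refine mul_le_of_le_one_left (mixing_pos P ht).le (mul_le_one₀ ?_ (by positivity) ?_)
  · exact Real.sqrt_le_one.2 (shrinkage_le_one ht)
  · exact Real.exp_le_one_iff.2 (by simp only [Left.neg_nonpos_iff]; positivity)

lemma measurable_wt : Measurable (wt P x τ) := by
  have := P.L_meas
  unfold wt
  fun_prop

lemma jointDens_nonneg {θ : ℝ} (ht : 0 < t) : 0 ≤ jointDens P τ x t θ := by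
  have := P.L_pos t ht
  have := P.K_pos
  unfold jointDens
  positivity

lemma measurable_jointDens {Z : Type*} [MeasurableSpace Z] {X T Θ : Z → ℝ} (hX : Measurable X)
    (hT : Measurable T) (hΘ : Measurable Θ) :
    Measurable fun z => jointDens P τ (X z) (T z) (Θ z) := by
  have := P.L_meas
  unfold jointDens
  fun_prop

lemma postw_eq_integral_jointDens (τ x θ : ℝ) :
    postw P τ x θ = ∫ t in Ioi (0 : ℝ), jointDens P τ x t θ := by
  unfold postw pdens jointDens
  rw [integral_const_mul]

lemma postw_nonneg (τ x θ : ℝ) : 0 ≤ postw P τ x θ := by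
  rw [postw_eq_integral_jointDens]
  exact setIntegral_nonneg measurableSet_Ioi fun t ht => jointDens_nonneg P ht

lemma measurable_postw : Measurable fun z : ℝ × ℝ => postw P τ z.1 z.2 := by
  simp only [postw_eq_integral_jointDens]
  have hjoint : Measurable fun z : (ℝ × ℝ) × ℝ => jointDens P τ z.1.1 z.2 z.1.2 :=
    measurable_jointDens P (by fun_prop) (by fun_prop) (by fun_prop)
  exact hjoint.stronglyMeasurable.integral_prod_right'.measurable

-- Completing the square in `θ`.
lemma jointDens_eq_mul_gaussianPDFReal {θ : ℝ} (hτ : 0 < τ) (ht : 0 < t) :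
    jointDens P τ x t θ = P.K * wt P x τ t *
      gaussianPDFReal ((1 - shrinkage τ t) * x) (1 - shrinkage τ t).toNNReal θ := by
  rw [gaussianPDFReal_def, Real.coe_toNNReal _ (one_sub_shrinkage_nonneg ht),
    one_sub_shrinkage_eq ht]
  unfold jointDens wt
  rw [mul_assoc (2 * Real.pi), mul_assoc 2 t]
  obtain ⟨s, hs, h⟩ : ∃ s, 0 < s ∧ t * τ ^ 2 = s := ⟨_, by positivity, rfl⟩
  rw [h]
  have hnorm : (Real.sqrt (2 * Real.pi * s))⁻¹ =
      (1 + s) ^ (-(1 : ℝ) / 2) * (Real.sqrt (2 * Real.pi * (s / (1 + s))))⁻¹ := by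
    rw [show 2 * Real.pi * s = (1 + s) * (2 * Real.pi * (s / (1 + s))) by field_simp,
      Real.sqrt_mul (by positivity), mul_inv, Real.sqrt_eq_rpow, ← Real.rpow_neg (by positivity)]
    norm_num
  have hexp : Real.exp (-(x - θ) ^ 2 / 2) * Real.exp (-θ ^ 2 / (2 * s)) =
      Real.exp (-x ^ 2 / (2 * (1 + s))) *
        Real.exp (-(θ - s / (1 + s) * x) ^ 2 / (2 * (s / (1 + s)))) := by
    rw [← Real.exp_add, ← Real.exp_add]
    congr 1
    field_simp
    ring
  rw [hnorm]
  linear_combination (1 + s) ^ (-(1 : ℝ) / 2) * (Real.sqrt (2 * Real.pi * (s / (1 + s))))⁻¹ *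
    (P.K * t ^ (-P.a - 1) * P.L t) * hexp

lemma toNNReal_one_sub_shrinkage_ne_zero (hτ : 0 < τ) (ht : 0 < t) :
    (1 - shrinkage τ t).toNNReal ≠ 0 := by
  rw [one_sub_shrinkage_eq ht]
  exact (Real.toNNReal_pos.2 (by positivity)).ne'

lemma integrable_mul_jointDens {h : ℝ → ℝ} (hτ : 0 < τ) (ht : 0 < t)
    (hh : Integrable h (condPost τ x t)) : Integrable fun θ => h θ * jointDens P τ x t θ := by
  have := (integrable_gaussianReal_iff (toNNReal_one_sub_shrinkage_ne_zero hτ ht)).1 hh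
  refine (this.const_mul (P.K * wt P x τ t)).congr (ae_of_all _ fun θ => ?_)
  simp only [jointDens_eq_mul_gaussianPDFReal P hτ ht]
  ring

lemma integral_mul_jointDens (h : ℝ → ℝ) (hτ : 0 < τ) (ht : 0 < t) :
    ∫ θ, h θ * jointDens P τ x t θ = P.K * ((∫ θ, h θ ∂condPost τ x t) * wt P x τ t) := by
  rw [condPost, integral_gaussianReal_eq_integral_mul (toNNReal_one_sub_shrinkage_ne_zero hτ ht),
    mul_comm (∫ _, _), ← mul_assoc, ← integral_const_mul]
  refine integral_congr_ae (ae_of_all _ fun θ => ?_)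
  simp only [jointDens_eq_mul_gaussianPDFReal P hτ ht]
  ring

lemma integrable_prod_mul_jointDens {h : ℝ → ℝ} (hτ : 0 < τ) (hm : Measurable h)
    (h0 : 0 ≤ h) (hcond : ∀ t > 0, Integrable h (condPost τ x t))
    (hwt : IntegrableOn (fun t => (∫ θ, h θ ∂condPost τ x t) * wt P x τ t) (Ioi 0)) :
    Integrable (fun z : ℝ × ℝ => h z.2 * jointDens P τ x z.1 z.2)
      ((volume.restrict (Ioi 0)).prod volume) := by
  have hmeas : Measurable fun z : ℝ × ℝ => h z.2 * jointDens P τ x z.1 z.2 :=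
    (hm.comp measurable_snd).mul
      (measurable_jointDens P measurable_const measurable_fst measurable_snd)
  refine (integrable_prod_iff hmeas.aestronglyMeasurable).2 ⟨?_, ?_⟩
  · exact (ae_restrict_iff' measurableSet_Ioi).2
      (ae_of_all _ fun t ht => integrable_mul_jointDens P hτ ht (hcond t ht))
  · refine IntegrableOn.congr_fun (hwt.const_mul P.K) (fun t ht => ?_) measurableSet_Ioi
    have hnorm (θ : ℝ) : ‖h θ * jointDens P τ x t θ‖ = h θ * jointDens P τ x t θ :=
      Real.norm_of_nonneg (mul_nonneg (h0 θ) (jointDens_nonneg P ht))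
    simp only [hnorm]
    exact (integral_mul_jointDens P h hτ ht).symm

lemma integrable_mul_postw {h : ℝ → ℝ} (hτ : 0 < τ) (hm : Measurable h)
    (h0 : 0 ≤ h) (hcond : ∀ t > 0, Integrable h (condPost τ x t))
    (hwt : IntegrableOn (fun t => (∫ θ, h θ ∂condPost τ x t) * wt P x τ t) (Ioi 0)) :
    Integrable fun θ => h θ * postw P τ x θ := by
  simp only [postw_eq_integral_jointDens, ← integral_const_mul]
  exact (integrable_prod_mul_jointDens P hτ hm h0 hcond hwt).integral_prod_right

lemma integral_mul_postw {h : ℝ → ℝ} (hτ : 0 < τ) (hm : Measurable h)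
    (h0 : 0 ≤ h) (hcond : ∀ t > 0, Integrable h (condPost τ x t))
    (hwt : IntegrableOn (fun t => (∫ θ, h θ ∂condPost τ x t) * wt P x τ t) (Ioi 0)) :
    ∫ θ, h θ * postw P τ x θ =
      P.K * ∫ t in Ioi (0 : ℝ), (∫ θ, h θ ∂condPost τ x t) * wt P x τ t := by
  simp only [postw_eq_integral_jointDens, ← integral_const_mul]
  rw [← integral_integral_swap (f := fun t θ => h θ * jointDens P τ x t θ)
    (integrable_prod_mul_jointDens P hτ hm h0 hcond hwt)]
  exact setIntegral_congr_fun measurableSet_Ioi fun t ht => integral_mul_jointDens P h hτ ht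

end Posterior

section Properness

variable {P : Prior} {τ x : ℝ}

lemma integrableOn_wt_iff : IntegrableOn (wt P x τ) (Ioi 0) ↔ P.Proper := by
  refine ⟨fun hwt => ?_, fun hP => ?_⟩
  · rw [Prior.Proper, ← Ioc_union_Ioi_eq_Ioi zero_le_one]
    refine IntegrableOn.union ?_ ?_
    · refine ((hwt.mono_set Ioc_subset_Ioi_self).const_mul
        (Real.sqrt (shrinkage τ 1) * Real.exp (-(x ^ 2 / 2)))⁻¹).mono'
        (measurable_mixing P).aestronglyMeasurable
        ((ae_restrict_iff' measurableSet_Ioc).2 (ae_of_all _ fun t ht => ?_))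
      have ht0 : 0 < t := ht.1
      have hκ1 : 0 < shrinkage τ 1 := shrinkage_pos one_pos
      have hκ : shrinkage τ 1 ≤ shrinkage τ t :=
        one_div_le_one_div_of_le (by positivity) (by gcongr; exact ht.2)
      have hexp : x ^ 2 * shrinkage τ t ≤ x ^ 2 :=
        mul_le_of_le_one_right (sq_nonneg x) (shrinkage_le_one ht0)
      rw [Real.norm_of_nonneg (mixing_pos P ht0).le, le_inv_mul_iff₀ (by positivity),
        wt_eq P ht0]
      have := mixing_pos P ht0
      gcongr
    · refine ((integrableOn_Ioi_rpow_of_lt (a := -P.a - 1) (by linarith [P.a_pos])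
        one_pos).const_mul P.M).mono' (measurable_mixing P).aestronglyMeasurable
        ((ae_restrict_iff' measurableSet_Ioi).2 (ae_of_all _ fun t ht => ?_))
      have ht0 : 0 < t := one_pos.trans ht
      rw [Real.norm_of_nonneg (mixing_pos P ht0).le]
      exact mixing_le P ht0
  · refine Integrable.mono' hP (measurable_wt P).aestronglyMeasurable
      ((ae_restrict_iff' measurableSet_Ioi).2 (ae_of_all _ fun t ht => ?_))
    rw [Real.norm_of_nonneg (wt_pos P ht).le]
    exact wt_le_mixing P ht

lemma jointDens_le {t θ : ℝ} (ht : 0 < t) :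
    jointDens P τ x t θ ≤ (Real.sqrt (2 * Real.pi * τ ^ 2))⁻¹ * P.K * P.M *
      (t ^ (-(P.a + 1 / 2) - 1) * Real.exp (-(θ ^ 2 / (2 * τ ^ 2) / t))) := by
  have := P.K_pos
  have hlik : Real.exp (-(x - θ) ^ 2 / 2) ≤ 1 :=
    Real.exp_le_one_iff.2 (by linarith [sq_nonneg (x - θ)])
  have hsqrt : (Real.sqrt (2 * Real.pi * t * τ ^ 2))⁻¹ =
      (Real.sqrt (2 * Real.pi * τ ^ 2))⁻¹ * t ^ (-(1 / 2) : ℝ) := by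
    rw [mul_right_comm, Real.sqrt_mul (by positivity), mul_inv, Real.sqrt_eq_rpow t,
      ← Real.rpow_neg ht.le]
  have hpow : t ^ (-(P.a + 1 / 2) - 1) = t ^ (-(1 / 2) : ℝ) * t ^ (-P.a - 1) := by
    rw [← Real.rpow_add ht]
    ring_nf
  have hexp : -(θ ^ 2 / (2 * τ ^ 2) / t) = -θ ^ 2 / (2 * t * τ ^ 2) := by
    rw [div_div, neg_div, mul_right_comm]
  rw [jointDens, hsqrt, hpow, hexp]
  calc _ ≤ 1 * ((Real.sqrt (2 * Real.pi * τ ^ 2))⁻¹ * t ^ (-(1 / 2) : ℝ) *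
        Real.exp (-θ ^ 2 / (2 * t * τ ^ 2)) * (P.K * t ^ (-P.a - 1) * P.M)) := by
        have := P.L_pos t ht
        gcongr
        exact P.L_le t ht
    _ = _ := by ring

lemma integrableOn_jointDens {θ : ℝ} (hτ : 0 < τ) (hθ : θ ≠ 0) :
    IntegrableOn (fun t => jointDens P τ x t θ) (Ioi 0) := by
  have hmeas : Measurable fun t => jointDens P τ x t θ :=
    measurable_jointDens P measurable_const measurable_id measurable_const
  refine ((integrableOn_rpow_mul_exp_neg_div_Ioi (s := P.a + 1 / 2) (b := θ ^ 2 / (2 * τ ^ 2))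
    (by linarith [P.a_pos]) (by positivity)).const_mul
    ((Real.sqrt (2 * Real.pi * τ ^ 2))⁻¹ * P.K * P.M)).mono' hmeas.aestronglyMeasurable
    ((ae_restrict_iff' measurableSet_Ioi).2 (ae_of_all _ fun t ht => ?_))
  rw [Real.norm_of_nonneg (jointDens_nonneg P ht)]
  exact jointDens_le ht

lemma proper_of_integrable_postw (hτ : 0 < τ) (h : Integrable (postw P τ x)) : P.Proper := by
  have hmeas : Measurable fun z : ℝ × ℝ => jointDens P τ x z.1 z.2 :=
    measurable_jointDens P measurable_const measurable_fst measurable_snd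
  have hjoint : Integrable (fun z : ℝ × ℝ => jointDens P τ x z.1 z.2)
      ((volume.restrict (Ioi 0)).prod volume) := by
    refine (integrable_prod_iff' hmeas.aestronglyMeasurable).2 ⟨?_, ?_⟩
    · filter_upwards [volume.ae_ne 0] with θ hθ using integrableOn_jointDens hτ hθ
    · refine h.congr (ae_of_all _ fun θ => ?_)
      rw [postw_eq_integral_jointDens]
      exact setIntegral_congr_fun measurableSet_Ioi fun t ht =>
        (Real.norm_of_nonneg (jointDens_nonneg P ht)).symm
  refine (integrableOn_wt_iff (x := x) (τ := τ)).1 (IntegrableOn.congr_fun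
    (hjoint.integral_prod_left.const_mul P.K⁻¹) (fun t ht => ?_) measurableSet_Ioi)
  have := integral_mul_jointDens P (x := x) (fun _ => 1) hτ ht
  simp only [one_mul, condPost, integral_const, probReal_univ, smul_eq_mul] at this
  simp only [this, inv_mul_cancel_left₀ P.K_pos.ne']

lemma integral_postw_eq_zero_of_not_proper (hP : ¬ P.Proper) (hτ : 0 < τ) :
    ∫ θ, postw P τ x θ = 0 :=
  integral_undef fun h => hP (proper_of_integrable_postw hτ h)

end Properness

section PosteriorExpectation

variable {P : Prior} {τ x c : ℝ} {g h : ℝ → ℝ}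

lemma integrableOn_comp_shrinkage_mul_wt (hP : P.Proper) (hg : Continuous g) :
    IntegrableOn (fun t => g (shrinkage τ t) * wt P x τ t) (Ioi 0) := by
  obtain ⟨B, hB⟩ := isCompact_Icc.exists_bound_of_continuousOn (s := Icc (0 : ℝ) 1) hg.continuousOn
  refine (((integrableOn_wt_iff (x := x) (τ := τ)).2 hP).const_mul B).mono'
    ((hg.measurable.comp measurable_shrinkage).mul (measurable_wt P)).aestronglyMeasurable
    ((ae_restrict_iff' measurableSet_Ioi).2 (ae_of_all _ fun t ht => ?_))
  rw [norm_mul, Real.norm_of_nonneg (wt_pos P ht).le]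
  exact mul_le_mul_of_nonneg_right (hB _ (shrinkage_mem_Icc ht)) (wt_pos P ht).le

lemma integral_wt_nonneg : 0 ≤ ∫ t in Ioi (0 : ℝ), wt P x τ t :=
  setIntegral_nonneg measurableSet_Ioi fun _ ht => (wt_pos P ht).le

lemma integral_wt_pos (hP : P.Proper) : 0 < ∫ t in Ioi (0 : ℝ), wt P x τ t := by
  refine (setIntegral_pos_iff_support_of_nonneg_ae ((ae_restrict_iff' measurableSet_Ioi).2
    (ae_of_all _ fun t ht => (wt_pos P ht).le)) (integrableOn_wt_iff.2 hP)).2 ?_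
  have hsub : Ioi 0 ⊆ Function.support (wt P x τ) := fun t ht => (wt_pos P ht).ne'
  rw [inter_eq_self_of_subset_right hsub, Real.volume_Ioi]
  exact ENNReal.zero_lt_top

lemma postExp_mono (hP : P.Proper) (hg : Continuous g) (hh : Continuous h)
    (hgh : ∀ κ ∈ Icc (0 : ℝ) 1, g κ ≤ h κ) : postExp P g x τ ≤ postExp P h x τ := by
  refine div_le_div_of_nonneg_right ?_ integral_wt_nonneg
  exact setIntegral_mono_on (integrableOn_comp_shrinkage_mul_wt hP hg)
    (integrableOn_comp_shrinkage_mul_wt hP hh) measurableSet_Ioi fun t ht =>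
      mul_le_mul_of_nonneg_right (hgh _ (shrinkage_mem_Icc ht)) (wt_pos P ht).le

lemma postExp_const (hP : P.Proper) (A : ℝ) : postExp P (fun _ => A) x τ = A := by
  rw [postExp, integral_const_mul, mul_div_cancel_right₀ _ (integral_wt_pos hP).ne']

lemma postExp_const_mul (B : ℝ) :
    postExp P (fun κ => B * g κ) x τ = B * postExp P g x τ := by
  simp only [postExp, mul_assoc, integral_const_mul, mul_div_assoc]

lemma postExp_add (hP : P.Proper) (hg : Continuous g) (hh : Continuous h) :
    postExp P (fun κ => g κ + h κ) x τ = postExp P g x τ + postExp P h x τ := by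
  rw [postExp, postExp, postExp, ← add_div]
  congr 1
  simp only [add_mul]
  exact integral_add (integrableOn_comp_shrinkage_mul_wt hP hg)
    (integrableOn_comp_shrinkage_mul_wt hP hh)

lemma postRisk_nonneg : 0 ≤ postRisk P τ c x :=
  div_nonneg (integral_nonneg fun θ => mul_nonneg (sq_nonneg _) (postw_nonneg P τ x θ))
    (integral_nonneg (postw_nonneg P τ x))

lemma measurable_postRisk : Measurable (postRisk P τ c) := by
  have hpost := measurable_postw P (τ := τ)
  have hnum : Measurable fun z : ℝ × ℝ => (z.2 - c) ^ 2 * postw P τ z.1 z.2 := by fun_prop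
  exact hnum.stronglyMeasurable.integral_prod_right'.measurable.div
    hpost.stronglyMeasurable.integral_prod_right'.measurable

lemma integral_sub_sq_condPost {t : ℝ} (ht : 0 < t) :
    ∫ θ, (θ - c) ^ 2 ∂condPost τ x t =
      ((1 - shrinkage τ t) * x - c) ^ 2 + (1 - shrinkage τ t) := by
  rw [condPost, integral_sub_sq_gaussianReal, Real.coe_toNNReal _ (one_sub_shrinkage_nonneg ht)]

lemma integrableOn_integral_sub_sq_condPost_mul_wt (hP : P.Proper) :
    IntegrableOn (fun t => (∫ θ, (θ - c) ^ 2 ∂condPost τ x t) * wt P x τ t) (Ioi 0) := by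
  refine IntegrableOn.congr_fun (integrableOn_comp_shrinkage_mul_wt
    (x := x) (τ := τ) (g := fun κ => ((1 - κ) * x - c) ^ 2 + (1 - κ)) hP (by fun_prop))
    (fun t ht => ?_) measurableSet_Ioi
  simp only [integral_sub_sq_condPost ht]

lemma integrable_sub_sq_mul_postw (hP : P.Proper) (hτ : 0 < τ) :
    Integrable fun θ => (θ - c) ^ 2 * postw P τ x θ :=
  integrable_mul_postw P hτ (by fun_prop) (fun _ => sq_nonneg _)
    (fun _ _ => integrable_sub_sq_gaussianReal _ _ _)
    (integrableOn_integral_sub_sq_condPost_mul_wt hP)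

lemma integral_one_condPost_mul_wt (t : ℝ) :
    (∫ _, (1 : ℝ) ∂condPost τ x t) * wt P x τ t = wt P x τ t := by
  rw [condPost, integral_const, probReal_univ, one_smul, one_mul]

lemma integrable_postw (hP : P.Proper) (hτ : 0 < τ) : Integrable (postw P τ x) := by
  have := integrable_mul_postw P (x := x) (h := fun _ => 1) hτ measurable_const
    (fun _ => zero_le_one) (fun _ _ => by unfold condPost; fun_prop)
    (by simpa only [integral_one_condPost_mul_wt] using integrableOn_wt_iff.2 hP)
  simpa only [one_mul] using this

lemma integral_postw (hP : P.Proper) (hτ : 0 < τ) :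
    ∫ θ, postw P τ x θ = P.K * ∫ t in Ioi (0 : ℝ), wt P x τ t := by
  have := integral_mul_postw P (x := x) (h := fun _ => 1) hτ measurable_const
    (fun _ => zero_le_one) (fun _ _ => by unfold condPost; fun_prop)
    (by simpa only [integral_one_condPost_mul_wt] using integrableOn_wt_iff.2 hP)
  simpa only [one_mul, integral_one_condPost_mul_wt] using this

lemma postRisk_eq_postExp (hP : P.Proper) (hτ : 0 < τ) :
    postRisk P τ c x = postExp P (fun κ => ((1 - κ) * x - c) ^ 2 + (1 - κ)) x τ := by
  rw [postRisk, integral_postw hP hτ,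
    integral_mul_postw P (h := fun θ => (θ - c) ^ 2) hτ (by fun_prop) (fun _ => sq_nonneg _)
      (fun _ _ => integrable_sub_sq_gaussianReal _ _ _)
      (integrableOn_integral_sub_sq_condPost_mul_wt hP),
    mul_div_mul_left _ _ P.K_pos.ne', postExp]
  congr 1
  refine setIntegral_congr_fun measurableSet_Ioi fun t ht => ?_
  simp only [integral_sub_sq_condPost ht, shrinkage]

lemma postRisk_le (hP : P.Proper) (hτ : 0 < τ) :
    postRisk P τ c x ≤ 1 + 2 * (x - c) ^ 2 + 2 * x ^ 2 * postExp P (fun κ => κ) x τ := by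
  rw [postRisk_eq_postExp hP hτ, ← postExp_const hP (x := x) (τ := τ) (1 + 2 * (x - c) ^ 2),
    ← postExp_const_mul, ← postExp_add hP continuous_const (by fun_prop)]
  refine postExp_mono hP (by fun_prop) (by fun_prop) fun κ hκ => ?_
  have hsq : κ ^ 2 * x ^ 2 ≤ κ * x ^ 2 :=
    mul_le_mul_of_nonneg_right (by nlinarith [hκ.1, hκ.2]) (sq_nonneg x)
  have hcross : ((1 - κ) * x - c) ^ 2 ≤ 2 * (x - c) ^ 2 + 2 * (κ ^ 2 * x ^ 2) := by
    linarith [sq_nonneg (x - c + κ * x),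
      show ((1 - κ) * x - c) ^ 2 + (x - c + κ * x) ^ 2 = 2 * (x - c) ^ 2 + 2 * (κ ^ 2 * x ^ 2) by
        ring]
  linarith [hκ.1]

lemma postRisk_zero_le (hP : P.Proper) (hτ : 0 < τ) :
    postRisk P τ 0 x ≤ (1 + x ^ 2) * postExp P (fun κ => 1 - κ) x τ := by
  rw [postRisk_eq_postExp hP hτ, ← postExp_const_mul]
  refine postExp_mono hP (by fun_prop) (by fun_prop) fun κ hκ => ?_
  have hsq : (1 - κ) ^ 2 * x ^ 2 ≤ (1 - κ) * x ^ 2 :=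
    mul_le_mul_of_nonneg_right (by nlinarith [hκ.1, hκ.2]) (sq_nonneg x)
  linarith [show ((1 - κ) * x - 0) ^ 2 = (1 - κ) ^ 2 * x ^ 2 by ring]

end PosteriorExpectation

section ShrinkageExpectation

variable {P : Prior} {τ x l : ℝ}

lemma mul_le_integral_wt (hP : P.Proper) (hl : P.t₀ ≤ l) :
    l * (Real.sqrt (shrinkage τ (2 * l)) * Real.exp (-(x ^ 2 * shrinkage τ l / 2)) *
      ((2 * l) ^ (-P.a - 1) * P.c₀)) ≤ ∫ t in Ioi (0 : ℝ), wt P x τ t := by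
  have hl0 : 0 < l := P.t₀_pos.trans_le hl
  have hsub : Icc l (2 * l) ⊆ Ioi 0 := fun t ht => hl0.trans_le ht.1
  have hwt : IntegrableOn (wt P x τ) (Ioi 0) := integrableOn_wt_iff.2 hP
  have hanti {s t : ℝ} (hs : 0 < s) (hst : s ≤ t) : shrinkage τ t ≤ shrinkage τ s :=
    one_div_le_one_div_of_le (by positivity) (by gcongr)
  calc _ = ∫ _ in Icc l (2 * l), Real.sqrt (shrinkage τ (2 * l)) *
        Real.exp (-(x ^ 2 * shrinkage τ l / 2)) * ((2 * l) ^ (-P.a - 1) * P.c₀) := by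
        rw [setIntegral_const, Real.volume_real_Icc_of_le (by linarith), smul_eq_mul]
        ring
    _ ≤ ∫ t in Icc l (2 * l), wt P x τ t := by
        refine setIntegral_mono_on (integrable_const _) (hwt.mono_set hsub)
          measurableSet_Icc fun t ht => ?_
        have ht0 : 0 < t := hsub ht
        have hc := P.c₀_pos
        rw [wt_eq P ht0, Prior.mixing]
        gcongr ?_ * ?_ * (?_ * ?_)
        · exact Real.sqrt_le_sqrt (hanti ht0 ht.2)
        · have := hanti hl0 ht.1
          gcongr
        · exact Real.rpow_le_rpow_of_nonpos ht0 ht.2 (by linarith [P.a_pos])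
        · exact P.L_ge t (hl.trans ht.1)
    _ ≤ ∫ t in Ioi 0, wt P x τ t :=
        setIntegral_mono_set hwt ((ae_restrict_iff' measurableSet_Ioi).2
          (ae_of_all _ fun t ht => (wt_pos P ht).le)) hsub.eventuallyLE

lemma exists_mul_exp_le_integral_wt (hP : P.Proper) : ∃ c > 0, ∀ τ x : ℝ, 0 < τ → τ ≤ 1 →
    c * Real.exp (-(x ^ 2 / 2)) ≤ ∫ t in Ioi (0 : ℝ), wt P x τ t := by
  have ht₀ := P.t₀_pos
  have hc₀ := P.c₀_pos
  refine ⟨P.t₀ * (Real.sqrt (shrinkage 1 (2 * P.t₀)) * ((2 * P.t₀) ^ (-P.a - 1) * P.c₀)),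
    ?_, fun τ x hτ hτ1 => le_trans ?_ (mul_le_integral_wt hP le_rfl)⟩
  · have : 0 < shrinkage 1 (2 * P.t₀) := shrinkage_pos (by positivity)
    positivity
  · have hκ : shrinkage 1 (2 * P.t₀) ≤ shrinkage τ (2 * P.t₀) :=
      one_div_le_one_div_of_le (by positivity) (by gcongr)
    have hexp : x ^ 2 * shrinkage τ P.t₀ ≤ x ^ 2 :=
      mul_le_of_le_one_right (sq_nonneg x) (shrinkage_le_one ht₀)
    calc _ = P.t₀ * (Real.sqrt (shrinkage 1 (2 * P.t₀)) * Real.exp (-(x ^ 2 / 2)) *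
          ((2 * P.t₀) ^ (-P.a - 1) * P.c₀)) := by ring
      _ ≤ _ := by gcongr

lemma sqrt_mul_rpow_le_sqrt_shrinkage {s : ℝ} (hs : 0 < s) (hτ : 0 < τ) (hx : 1 ≤ x ^ 2) :
    Real.sqrt (1 / (1 + s)) * (x ^ 2) ^ (-(1 / 2) : ℝ) ≤
      Real.sqrt (shrinkage τ (s * (x ^ 2 / τ ^ 2))) := by
  have hx0 : 0 < x ^ 2 := one_pos.trans_le hx
  rw [Real.rpow_neg hx0.le, ← Real.sqrt_eq_rpow, ← Real.sqrt_inv, ← Real.sqrt_mul (by positivity),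
    ← one_div, div_mul_div_comm, one_mul]
  refine Real.sqrt_le_sqrt (one_div_le_one_div_of_le (by positivity) ?_)
  field_simp
  linarith

lemma sq_mul_shrinkage_le {s : ℝ} (hs : 0 < s) (hτ : 0 < τ) :
    x ^ 2 * shrinkage τ (s * (x ^ 2 / τ ^ 2)) ≤ 1 / s := by
  rw [shrinkage, mul_one_div, div_le_div_iff₀ (by positivity) hs]
  field_simp
  linarith

-- The local variances of order `x² / τ²` already carry this much mass.
lemma exists_mul_rpow_le_integral_wt (hP : P.Proper) :
    ∃ c > 0, ∀ τ x : ℝ, 0 < τ → τ ≤ 1 → 1 ≤ x ^ 2 →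
      c * ((τ ^ 2) ^ P.a * (x ^ 2) ^ (-(P.a + 1 / 2))) ≤ ∫ t in Ioi (0 : ℝ), wt P x τ t := by
  have ht₀ := P.t₀_pos
  have hc₀ := P.c₀_pos
  refine ⟨Real.sqrt (1 / (1 + 2 * P.t₀)) * Real.exp (-(1 / P.t₀ / 2)) *
    (2 ^ (-P.a - 1) * P.t₀ ^ (-P.a) * P.c₀), by positivity, fun τ x hτ hτ1 hx => ?_⟩
  have hx0 : 0 < x ^ 2 := one_pos.trans_le hx
  have hl0 : 0 < P.t₀ * (x ^ 2 / τ ^ 2) := by positivity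
  have hl : P.t₀ ≤ P.t₀ * (x ^ 2 / τ ^ 2) :=
    le_mul_of_one_le_right ht₀.le ((one_le_div (by positivity)).2
      ((pow_le_one₀ hτ.le hτ1).trans hx))
  have hroot : Real.sqrt (1 / (1 + 2 * P.t₀)) * (x ^ 2) ^ (-(1 / 2) : ℝ) ≤
      Real.sqrt (shrinkage τ (2 * (P.t₀ * (x ^ 2 / τ ^ 2)))) := by
    rw [← mul_assoc 2]
    exact sqrt_mul_rpow_le_sqrt_shrinkage (by positivity) hτ hx
  have hexp : x ^ 2 * shrinkage τ (P.t₀ * (x ^ 2 / τ ^ 2)) ≤ 1 / P.t₀ :=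
    sq_mul_shrinkage_le ht₀ hτ
  have hpow : P.t₀ * (x ^ 2 / τ ^ 2) * (2 * (P.t₀ * (x ^ 2 / τ ^ 2))) ^ (-P.a - 1) =
      2 ^ (-P.a - 1) * P.t₀ ^ (-P.a) * ((τ ^ 2) ^ P.a * (x ^ 2) ^ (-P.a)) := by
    rw [Real.mul_rpow two_pos.le hl0.le, mul_left_comm,
      ← Real.rpow_one_add' hl0.le (by linarith [P.a_pos]),
      show 1 + (-P.a - 1) = -P.a by ring, Real.mul_rpow ht₀.le (by positivity),
      Real.div_rpow (by positivity) (by positivity), Real.rpow_neg (sq_nonneg τ), div_inv_eq_mul]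
    ring
  have hsplit : (x ^ 2) ^ (-(P.a + 1 / 2)) = (x ^ 2) ^ (-(1 / 2) : ℝ) * (x ^ 2) ^ (-P.a) := by
    rw [← Real.rpow_add hx0]
    ring_nf
  calc _ = Real.sqrt (1 / (1 + 2 * P.t₀)) * (x ^ 2) ^ (-(1 / 2) : ℝ) *
        Real.exp (-(1 / P.t₀ / 2)) * (P.t₀ * (x ^ 2 / τ ^ 2) *
          (2 * (P.t₀ * (x ^ 2 / τ ^ 2))) ^ (-P.a - 1) * P.c₀) := by
        rw [hpow, hsplit]
        ring
    _ ≤ Real.sqrt (shrinkage τ (2 * (P.t₀ * (x ^ 2 / τ ^ 2)))) *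
        Real.exp (-(x ^ 2 * shrinkage τ (P.t₀ * (x ^ 2 / τ ^ 2)) / 2)) * (P.t₀ * (x ^ 2 / τ ^ 2) *
          (2 * (P.t₀ * (x ^ 2 / τ ^ 2))) ^ (-P.a - 1) * P.c₀) := by gcongr
    _ = _ := by ring
    _ ≤ _ := mul_le_integral_wt hP hl

lemma shrinkage_mul_wt_le {t : ℝ} (hτ : 0 < τ) (ht : 0 < t) :
    shrinkage τ t * wt P x τ t ≤ Real.exp (-(x ^ 2 / 4)) * P.mixing t +
      P.M * (τ ^ 2) ^ (-(3 / 2) : ℝ) *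
        (t ^ (-(P.a + 3 / 2) - 1) * Real.exp (-(x ^ 2 / (4 * τ ^ 2) / t))) := by
  have hκ0 : 0 < shrinkage τ t := shrinkage_pos ht
  have hmix := mixing_pos P ht
  have hM := P.M_pos
  rw [wt_eq P ht, mul_assoc (Real.sqrt _), ← mul_assoc]
  rcases le_or_gt 1 (t * τ ^ 2) with hlarge | hsmall
  · refine le_add_of_nonneg_of_le (by positivity) ?_
    have hκ : shrinkage τ t ≤ (t * τ ^ 2)⁻¹ := by
      rw [shrinkage, one_div]
      exact inv_anti₀ (by positivity) (by linarith)
    have hexp : x ^ 2 / (4 * τ ^ 2) / t ≤ x ^ 2 * shrinkage τ t / 2 := by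
      rw [shrinkage, div_div, mul_one_div, div_div]
      exact div_le_div_of_nonneg_left (sq_nonneg x) (by positivity) (by linarith)
    have hroot : shrinkage τ t * Real.sqrt (shrinkage τ t) ≤ (t * τ ^ 2) ^ (-(3 / 2) : ℝ) := by
      rw [Real.rpow_neg (by positivity), ← Real.inv_rpow (by positivity),
        show (3 / 2 : ℝ) = 1 + 1 / 2 by norm_num, Real.rpow_add (by positivity), Real.rpow_one,
        ← Real.sqrt_eq_rpow]
      gcongr
    calc _ ≤ (t * τ ^ 2) ^ (-(3 / 2) : ℝ) *
          (Real.exp (-(x ^ 2 / (4 * τ ^ 2) / t)) * (P.M * t ^ (-P.a - 1))) := by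
          gcongr
          exact mixing_le P ht
      _ = _ := by
          rw [Real.mul_rpow ht.le (sq_nonneg τ),
            show -(P.a + 3 / 2) - 1 = -(3 / 2) + (-P.a - 1) by ring, Real.rpow_add ht]
          ring
  · refine le_add_of_le_of_nonneg ?_ (by positivity)
    have hκ : 1 / 2 ≤ shrinkage τ t :=
      one_div_le_one_div_of_le (by positivity) (by linarith)
    have hroot : shrinkage τ t * Real.sqrt (shrinkage τ t) ≤ 1 :=
      mul_le_one₀ (shrinkage_le_one ht) (by positivity)
        (Real.sqrt_le_one.2 (shrinkage_le_one ht))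
    have hexp : x ^ 2 / 4 ≤ x ^ 2 * shrinkage τ t / 2 := by nlinarith [sq_nonneg x]
    refine (mul_le_of_le_one_left (by positivity) hroot).trans ?_
    gcongr

lemma integral_shrinkage_mul_wt_le (hP : P.Proper) (hτ : 0 < τ) (hx : x ≠ 0) :
    ∫ t in Ioi (0 : ℝ), shrinkage τ t * wt P x τ t ≤
      Real.exp (-(x ^ 2 / 4)) * (∫ t in Ioi (0 : ℝ), P.mixing t) + P.M * (τ ^ 2) ^ (-(3 / 2) : ℝ) *
        ((x ^ 2 / (4 * τ ^ 2)) ^ (-(P.a + 3 / 2)) * Real.Gamma (P.a + 3 / 2)) := by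
  have hs : 0 < P.a + 3 / 2 := by linarith [P.a_pos]
  have hb : 0 < x ^ 2 / (4 * τ ^ 2) := by positivity
  have hint := (integrableOn_rpow_mul_exp_neg_div_Ioi hs hb).const_mul
    (P.M * (τ ^ 2) ^ (-(3 / 2) : ℝ))
  rw [← integral_rpow_mul_exp_neg_div_Ioi hs hb, ← integral_const_mul, ← integral_const_mul,
    ← integral_add (hP.const_mul _) hint]
  exact setIntegral_mono_on (integrableOn_comp_shrinkage_mul_wt hP continuous_id)
    ((hP.const_mul _).add hint) measurableSet_Ioi fun t ht => shrinkage_mul_wt_le hτ ht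

lemma exists_sq_mul_integral_shrinkage_mul_wt_le (hP : P.Proper) :
    ∃ C > 0, ∀ τ x : ℝ, 0 < τ → x ≠ 0 →
      x ^ 2 * ∫ t in Ioi (0 : ℝ), shrinkage τ t * wt P x τ t ≤
        C * (x ^ 2 * Real.exp (-(x ^ 2 / 4)) + (τ ^ 2) ^ P.a * (x ^ 2) ^ (-(P.a + 1 / 2))) := by
  have hM := P.M_pos
  have ha := P.a_pos
  have : 0 < Real.Gamma (P.a + 3 / 2) := Real.Gamma_pos_of_pos (by positivity)
  have hI : 0 ≤ ∫ t in Ioi (0 : ℝ), P.mixing t :=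
    setIntegral_nonneg measurableSet_Ioi fun t ht => (mixing_pos P ht).le
  refine ⟨(∫ t in Ioi (0 : ℝ), P.mixing t) + P.M * 4 ^ (P.a + 3 / 2) * Real.Gamma (P.a + 3 / 2),
    by positivity, fun τ x hτ hx => ?_⟩
  have hx0 : 0 < x ^ 2 := by positivity
  have hscale : x ^ 2 * ((τ ^ 2) ^ (-(3 / 2) : ℝ) * (x ^ 2 / (4 * τ ^ 2)) ^ (-(P.a + 3 / 2))) =
      4 ^ (P.a + 3 / 2) * ((τ ^ 2) ^ P.a * (x ^ 2) ^ (-(P.a + 1 / 2))) := by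
    have hτpow : (τ ^ 2) ^ P.a = (τ ^ 2) ^ (-(3 / 2) : ℝ) * (τ ^ 2) ^ (P.a + 3 / 2) := by
      rw [← Real.rpow_add (by positivity)]
      ring_nf
    have hxpow : (x ^ 2) ^ (-(P.a + 1 / 2)) = x ^ 2 * (x ^ 2) ^ (-(P.a + 3 / 2)) := by
      rw [← Real.rpow_one_add' hx0.le (by linarith)]
      ring_nf
    rw [hτpow, hxpow, Real.div_rpow hx0.le (by positivity),
      Real.rpow_neg (by positivity) (P.a + 3 / 2), Real.rpow_neg (by positivity) (P.a + 3 / 2),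
      div_inv_eq_mul, Real.mul_rpow (by norm_num) (sq_nonneg τ)]
    ring
  have hD : 0 ≤ (τ ^ 2) ^ P.a * (x ^ 2) ^ (-(P.a + 1 / 2)) := by positivity
  have hE : 0 ≤ x ^ 2 * Real.exp (-(x ^ 2 / 4)) := by positivity
  calc _ ≤ _ := mul_le_mul_of_nonneg_left (integral_shrinkage_mul_wt_le hP hτ hx) hx0.le
    _ = (∫ t in Ioi (0 : ℝ), P.mixing t) * (x ^ 2 * Real.exp (-(x ^ 2 / 4))) +
        P.M * 4 ^ (P.a + 3 / 2) * Real.Gamma (P.a + 3 / 2) *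
          ((τ ^ 2) ^ P.a * (x ^ 2) ^ (-(P.a + 1 / 2))) := by
        linear_combination P.M * Real.Gamma (P.a + 3 / 2) * hscale
    _ ≤ _ := by
        have hG : 0 ≤ P.M * 4 ^ (P.a + 3 / 2) * Real.Gamma (P.a + 3 / 2) := by positivity
        nlinarith [mul_nonneg hI hD, mul_nonneg hG hE]

lemma sq_mul_exp_neg_le_of_log_le {a : ℝ} (ha : 0 < a) (hτ : 0 < τ) (hx : x ≠ 0)
    (hlog : 16 * a * Real.log (1 / τ) ≤ x ^ 2) :
    x ^ 2 * Real.exp (-(x ^ 2 / 4)) ≤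
      (8 * (a + 3 / 2)) ^ (a + 3 / 2) * ((τ ^ 2) ^ a * (x ^ 2) ^ (-(a + 1 / 2))) := by
  have hx0 : 0 < x ^ 2 := by positivity
  have hτpow : (τ ^ 2) ^ a = Real.exp (-(2 * a * Real.log (1 / τ))) := by
    rw [Real.rpow_def_of_pos (by positivity), Real.log_pow, one_div, Real.log_inv]
    push_cast
    ring_nf
  have hdecay : Real.exp (-(x ^ 2 / 8)) ≤ (τ ^ 2) ^ a := by
    rw [hτpow]
    exact Real.exp_le_exp.2 (by linarith)
  have hpoly := rpow_mul_exp_neg_mul_le (k := a + 3 / 2) (b := 1 / 8) (by positivity)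
    (by norm_num) hx0.le
  calc x ^ 2 * Real.exp (-(x ^ 2 / 4)) = ((x ^ 2) ^ (a + 3 / 2) * Real.exp (-(1 / 8 * x ^ 2))) *
        (Real.exp (-(x ^ 2 / 8)) * (x ^ 2) ^ (-(a + 1 / 2))) := by
        have hxpow : x ^ 2 = (x ^ 2) ^ (a + 3 / 2) * (x ^ 2) ^ (-(a + 1 / 2)) := by
          rw [← Real.rpow_add hx0, show a + 3 / 2 + -(a + 1 / 2) = 1 by ring, Real.rpow_one]
        have hexp : Real.exp (-(x ^ 2 / 4)) =
            Real.exp (-(1 / 8 * x ^ 2)) * Real.exp (-(x ^ 2 / 8)) := by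
          rw [← Real.exp_add]
          ring_nf
        linear_combination Real.exp (-(x ^ 2 / 4)) * hxpow +
          (x ^ 2) ^ (a + 3 / 2) * (x ^ 2) ^ (-(a + 1 / 2)) * hexp
    _ ≤ ((a + 3 / 2) / (1 / 8)) ^ (a + 3 / 2) * ((τ ^ 2) ^ a * (x ^ 2) ^ (-(a + 1 / 2))) := by
        gcongr
    _ = _ := by ring_nf

lemma exists_sq_mul_postExp_shrinkage_le (hP : P.Proper) :
    ∃ C > 0, ∀ τ x : ℝ, 0 < τ → τ ≤ Real.exp (-1) →
      x ^ 2 * postExp P (fun κ => κ) x τ ≤ C * Real.log (1 / τ) := by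
  obtain ⟨c, hc, hlow⟩ := exists_mul_rpow_le_integral_wt hP
  obtain ⟨C, hC, hupp⟩ := exists_sq_mul_integral_shrinkage_mul_wt_le hP
  have ha := P.a_pos
  set B := (8 * (P.a + 3 / 2)) ^ (P.a + 3 / 2)
  have : 0 < B := by positivity
  refine ⟨max (16 * (P.a + 1)) (C * (B + 1) / c), by positivity, fun τ x hτ hτe => ?_⟩
  have hΛ : 1 ≤ Real.log (1 / τ) := one_le_log_one_div hτ hτe
  rcases le_or_gt (x ^ 2) (16 * (P.a + 1) * Real.log (1 / τ)) with hsmall | hlarge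
  · have hle : postExp P (fun κ => κ) x τ ≤ 1 :=
      (postExp_mono hP continuous_id continuous_const fun κ hκ => hκ.2).trans
        (postExp_const hP 1).le
    calc _ ≤ x ^ 2 := mul_le_of_le_one_right (sq_nonneg x) hle
      _ ≤ _ := hsmall
      _ ≤ _ := by gcongr; exact le_max_left _ _
  · have hx1 : 1 ≤ x ^ 2 := by nlinarith
    have hx : x ≠ 0 := fun h => by norm_num [h] at hx1
    have hτ1 : τ ≤ 1 := hτe.trans (Real.exp_le_one_iff.2 (by norm_num))
    have : 0 < (τ ^ 2) ^ P.a * (x ^ 2) ^ (-(P.a + 1 / 2)) := by positivity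
    have htail := sq_mul_exp_neg_le_of_log_le (x := x) ha hτ hx (by nlinarith)
    have hquot : x ^ 2 * postExp P (fun κ => κ) x τ ≤ C * (B + 1) / c := by
      rw [postExp, ← mul_div_assoc, div_le_div_iff₀ (integral_wt_pos hP) hc]
      calc _ ≤ C * ((B + 1) * ((τ ^ 2) ^ P.a * (x ^ 2) ^ (-(P.a + 1 / 2)))) * c := by
            refine mul_le_mul_of_nonneg_right ((hupp τ x hτ hx).trans ?_) hc.le
            gcongr
            linarith
        _ = C * (B + 1) * (c * ((τ ^ 2) ^ P.a * (x ^ 2) ^ (-(P.a + 1 / 2)))) := by ring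
        _ ≤ _ := by
            gcongr
            exact hlow τ x hτ hτ1 hx1
    calc _ ≤ C * (B + 1) / c := hquot
      _ ≤ max (16 * (P.a + 1)) (C * (B + 1) / c) := le_max_right _ _
      _ ≤ _ := le_mul_of_one_le_right (by positivity) hΛ

end ShrinkageExpectation

section CoordinateRisk

variable {P : Prior} {τ x c b : ℝ}

lemma gauss_sub_eq_gaussianPDFReal (c x : ℝ) : gauss (x - c) = gaussianPDFReal c 1 x := by
  simp only [gauss, gaussianPDFReal_def, NNReal.coe_one, mul_one]

lemma gauss_le_exp (z : ℝ) : gauss z ≤ Real.exp (-(z ^ 2 / 2)) := by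
  rw [gauss, neg_div]
  refine mul_le_of_le_one_left (Real.exp_pos _).le (inv_le_one_of_one_le₀ ?_)
  exact Real.one_le_sqrt.2 (by linarith [Real.two_le_pi])

lemma E1_eq_integral_gaussianReal (c : ℝ) (f : ℝ → ℝ) :
    E1 c f = ∫ x, f x ∂gaussianReal c 1 := by
  rw [integral_gaussianReal_eq_integral_mul one_ne_zero, E1]
  simp only [gauss_sub_eq_gaussianPDFReal]

lemma integrable_postRisk (hP : P.Proper) (hτ : 0 < τ) :
    Integrable (postRisk P τ c) (gaussianReal c 1) := by
  have hdom : Integrable (fun x => 1 + 2 * (x - c) ^ 2 + 2 * (x - 0) ^ 2) (gaussianReal c 1) :=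
    ((integrable_const _).add ((integrable_sub_sq_gaussianReal _ _ _).const_mul _)).add
      ((integrable_sub_sq_gaussianReal _ _ _).const_mul _)
  refine hdom.mono' measurable_postRisk.aestronglyMeasurable (ae_of_all _ fun x => ?_)
  rw [Real.norm_of_nonneg postRisk_nonneg, sub_zero]
  have hκ : postExp P (fun κ => κ) x τ ≤ 1 :=
    (postExp_mono hP continuous_id continuous_const fun κ hκ => hκ.2).trans (postExp_const hP 1).le
  exact (postRisk_le hP hτ).trans
    (add_le_add_right (mul_le_of_le_one_right (by positivity) hκ) _)

lemma exists_E1_postRisk_le (hP : P.Proper) :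
    ∃ C > 0, ∀ τ c : ℝ, 0 < τ → τ ≤ Real.exp (-1) →
      E1 c (postRisk P τ c) ≤ C * Real.log (1 / τ) := by
  obtain ⟨C, hC, hκ⟩ := exists_sq_mul_postExp_shrinkage_le hP
  refine ⟨2 * C + 3, by positivity, fun τ c hτ hτe => ?_⟩
  have hΛ : 1 ≤ Real.log (1 / τ) := one_le_log_one_div hτ hτe
  have hint : Integrable (fun x => 1 + 2 * C * Real.log (1 / τ) + 2 * (x - c) ^ 2)
      (gaussianReal c 1) :=
    (integrable_const _).add ((integrable_sub_sq_gaussianReal _ _ _).const_mul _)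
  calc E1 c (postRisk P τ c) = ∫ x, postRisk P τ c x ∂gaussianReal c 1 :=
        E1_eq_integral_gaussianReal c _
    _ ≤ ∫ x, (1 + 2 * C * Real.log (1 / τ) + 2 * (x - c) ^ 2) ∂gaussianReal c 1 :=
        integral_mono (integrable_postRisk hP hτ) hint fun x => by
          linarith [postRisk_le (c := c) (x := x) hP hτ, hκ τ x hτ hτe]
    _ = 1 + 2 * C * Real.log (1 / τ) + 2 := by
        rw [integral_add (integrable_const _) ((integrable_sub_sq_gaussianReal _ _ _).const_mul _),
          integral_const_mul, integral_sub_sq_gaussianReal]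
        simp
    _ ≤ _ := by linarith

lemma integrableOn_one_sub_shrinkage_mul_rpow (hb : 0 < b) (hb1 : b < 1) (hτ : 0 < τ) :
    IntegrableOn (fun t => (1 - shrinkage τ t) * t ^ (-b - 1)) (Ioi 0) := by
  have := (integrableOn_Ioi_comp_mul_right_iff _ 0 (sq_pos_of_pos hτ)).2
    (by simpa only [zero_mul] using integrableOn_one_sub_inv_one_add_mul_rpow hb hb1)
  refine IntegrableOn.congr_fun (this.const_mul ((τ ^ 2) ^ (-b - 1))⁻¹) (fun t ht => ?_)
    measurableSet_Ioi
  simp only [Real.mul_rpow (le_of_lt ht) (sq_nonneg τ), shrinkage]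
  field_simp

lemma integral_one_sub_shrinkage_mul_rpow (b : ℝ) (hτ : 0 < τ) :
    ∫ t in Ioi (0 : ℝ), (1 - shrinkage τ t) * t ^ (-b - 1) =
      (τ ^ 2) ^ b * ∫ s in Ioi (0 : ℝ), (1 - 1 / (1 + s)) * s ^ (-b - 1) := by
  have hτ2 : 0 < τ ^ 2 := by positivity
  have hsubst := integral_comp_mul_right_Ioi (fun s => (1 - 1 / (1 + s)) * s ^ (-b - 1)) 0 hτ2
  rw [zero_mul, smul_eq_mul] at hsubst
  have hpow : (τ ^ 2) ^ b = (τ ^ 2) ^ (-(-b - 1)) * (τ ^ 2)⁻¹ := by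
    rw [← Real.rpow_neg_one, ← Real.rpow_add hτ2]
    ring_nf
  rw [hpow, mul_assoc, ← hsubst, ← integral_const_mul]
  refine setIntegral_congr_fun measurableSet_Ioi fun t ht => ?_
  simp only [Real.mul_rpow (le_of_lt ht) hτ2.le, Real.rpow_neg hτ2.le (-b - 1), shrinkage]
  field_simp

lemma one_sub_shrinkage_mul_mixing_le {t : ℝ} (hb1 : b ≤ 1) (hba : b ≤ P.a) (hτ : 0 < τ)
    (hτ1 : τ ≤ 1) (ht : 0 < t) :
    (1 - shrinkage τ t) * P.mixing t ≤
      (τ ^ 2) ^ b * P.mixing t + P.M * ((1 - shrinkage τ t) * t ^ (-b - 1)) := by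
  have hκ : 0 ≤ 1 - shrinkage τ t := one_sub_shrinkage_nonneg ht
  have hmix := mixing_pos P ht
  have hM := P.M_pos
  rcases le_or_gt t 1 with hle | hgt
  · refine le_add_of_le_of_nonneg (mul_le_mul_of_nonneg_right ?_ hmix.le) (by positivity)
    calc 1 - shrinkage τ t = t * τ ^ 2 / (1 + t * τ ^ 2) := one_sub_shrinkage_eq ht
      _ ≤ t * τ ^ 2 := div_le_self (by positivity) (le_add_of_nonneg_right (by positivity))
      _ ≤ τ ^ 2 := mul_le_of_le_one_left (sq_nonneg τ) hle
      _ = (τ ^ 2) ^ (1 : ℝ) := (Real.rpow_one _).symm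
      _ ≤ (τ ^ 2) ^ b :=
        Real.rpow_le_rpow_of_exponent_ge (by positivity) (pow_le_one₀ hτ.le hτ1) hb1
  · refine le_add_of_nonneg_of_le (by positivity) ?_
    calc _ ≤ (1 - shrinkage τ t) * (P.M * t ^ (-b - 1)) := by
          refine mul_le_mul_of_nonneg_left ((mixing_le P ht).trans ?_) hκ
          gcongr
          exact hgt.le
      _ = _ := by ring

lemma integrableOn_one_sub_shrinkage_mul_mixing (hP : P.Proper) :
    IntegrableOn (fun t => (1 - shrinkage τ t) * P.mixing t) (Ioi 0) := by
  refine Integrable.mono' hP ((measurable_const.sub measurable_shrinkage).mul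
    (measurable_mixing P)).aestronglyMeasurable
    ((ae_restrict_iff' measurableSet_Ioi).2 (ae_of_all _ fun t ht => ?_))
  rw [Real.norm_of_nonneg (mul_nonneg (one_sub_shrinkage_nonneg ht) (mixing_pos P ht).le)]
  exact mul_le_of_le_one_left (mixing_pos P ht).le (by linarith [shrinkage_pos (τ := τ) ht])

lemma exists_integral_one_sub_shrinkage_mul_mixing_le (hP : P.Proper) (hb : 0 < b) (hb1 : b < 1)
    (hba : b ≤ P.a) : ∃ C > 0, ∀ τ : ℝ, 0 < τ → τ ≤ 1 →
      ∫ t in Ioi (0 : ℝ), (1 - shrinkage τ t) * P.mixing t ≤ C * (τ ^ 2) ^ b := by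
  set I := ∫ t in Ioi (0 : ℝ), P.mixing t
  set J := ∫ s in Ioi (0 : ℝ), (1 - 1 / (1 + s)) * s ^ (-b - 1)
  refine ⟨|I + P.M * J| + 1, by positivity, fun τ hτ hτ1 => ?_⟩
  have hmix := hP.const_mul ((τ ^ 2) ^ b)
  have hpow := (integrableOn_one_sub_shrinkage_mul_rpow hb hb1 hτ).const_mul P.M
  calc _ ≤ ∫ t in Ioi (0 : ℝ),
          ((τ ^ 2) ^ b * P.mixing t + P.M * ((1 - shrinkage τ t) * t ^ (-b - 1))) := by
        refine setIntegral_mono_on (integrableOn_one_sub_shrinkage_mul_mixing hP) (hmix.add hpow)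
          measurableSet_Ioi fun t ht => ?_
        exact one_sub_shrinkage_mul_mixing_le hb1.le hba hτ hτ1 ht
    _ = (I + P.M * J) * (τ ^ 2) ^ b := by
        rw [integral_add hmix hpow, integral_const_mul, integral_const_mul,
          integral_one_sub_shrinkage_mul_rpow b hτ]
        ring
    _ ≤ _ := by
        refine mul_le_mul_of_nonneg_right ?_ (by positivity)
        linarith [le_abs_self (I + P.M * J)]

lemma one_add_sq_mul_sqrt_mul_exp_le {κ : ℝ} (hκ : κ ∈ Icc (0 : ℝ) 1) :
    (1 + x ^ 2) * (Real.sqrt κ * Real.exp (-(x ^ 2 * κ / 2))) ≤ 1 + |x| := by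
  have hroot : Real.sqrt κ * Real.exp (-(x ^ 2 * κ / 2)) ≤ 1 :=
    mul_le_one₀ (Real.sqrt_le_one.2 hκ.2) (by positivity)
      (Real.exp_le_one_iff.2 (by have := hκ.1; simp only [Left.neg_nonpos_iff]; positivity))
  have hprod : |x| * Real.sqrt κ * Real.exp (-(x ^ 2 * κ / 2)) ≤ 1 := by
    have hsq : (|x| * Real.sqrt κ) ^ 2 = x ^ 2 * κ := by
      rw [mul_pow, sq_abs, Real.sq_sqrt hκ.1]
    rw [Real.exp_neg, mul_inv_le_iff₀ (Real.exp_pos _), one_mul]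
    refine le_trans ?_ (Real.add_one_le_exp _)
    nlinarith [sq_nonneg (|x| * Real.sqrt κ - 1)]
  calc _ = Real.sqrt κ * Real.exp (-(x ^ 2 * κ / 2)) +
        |x| * (|x| * Real.sqrt κ * Real.exp (-(x ^ 2 * κ / 2))) := by
        rw [← sq_abs x]
        ring
    _ ≤ 1 + |x| * 1 := by gcongr
    _ = 1 + |x| := by rw [mul_one]

lemma exists_postRisk_zero_mul_exp_le (hP : P.Proper) (hb : 0 < b) (hb1 : b < 1) (hba : b ≤ P.a) :
    ∃ C > 0, ∀ τ x : ℝ, 0 < τ → τ ≤ 1 →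
      postRisk P τ 0 x * Real.exp (-(x ^ 2 / 2)) ≤ C * (τ ^ 2) ^ b * (1 + |x|) := by
  obtain ⟨c, hc, hlow⟩ := exists_mul_exp_le_integral_wt hP
  obtain ⟨C, hC, hmix⟩ := exists_integral_one_sub_shrinkage_mul_mixing_le hP hb hb1 hba
  refine ⟨C / c, by positivity, fun τ x hτ hτ1 => ?_⟩
  have hnum : (1 + x ^ 2) * ∫ t in Ioi (0 : ℝ), (1 - shrinkage τ t) * wt P x τ t ≤
      (1 + |x|) * (C * (τ ^ 2) ^ b) := by
    refine le_trans ?_ (mul_le_mul_of_nonneg_left (hmix τ hτ hτ1) (by positivity))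
    rw [← integral_const_mul, ← integral_const_mul]
    refine setIntegral_mono_on ((integrableOn_comp_shrinkage_mul_wt hP
      (continuous_const.sub continuous_id)).const_mul _)
      ((integrableOn_one_sub_shrinkage_mul_mixing hP).const_mul _) measurableSet_Ioi fun t ht => ?_
    calc _ = (1 + x ^ 2) * (Real.sqrt (shrinkage τ t) * Real.exp (-(x ^ 2 * shrinkage τ t / 2))) *
          ((1 - shrinkage τ t) * P.mixing t) := by
          rw [wt_eq P ht]
          ring
      _ ≤ _ := mul_le_mul_of_nonneg_right (one_add_sq_mul_sqrt_mul_exp_le (shrinkage_mem_Icc ht))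
          (mul_nonneg (one_sub_shrinkage_nonneg ht) (mixing_pos P ht).le)
  have hden : c * Real.exp (-(x ^ 2 / 2)) ≤ ∫ t in Ioi (0 : ℝ), wt P x τ t := hlow τ x hτ hτ1
  calc postRisk P τ 0 x * Real.exp (-(x ^ 2 / 2))
      ≤ (1 + x ^ 2) * postExp P (fun κ => 1 - κ) x τ * Real.exp (-(x ^ 2 / 2)) := by
        gcongr
        exact postRisk_zero_le hP hτ
    _ = ((1 + x ^ 2) * ∫ t in Ioi (0 : ℝ), (1 - shrinkage τ t) * wt P x τ t) *
          Real.exp (-(x ^ 2 / 2)) / ∫ t in Ioi (0 : ℝ), wt P x τ t := by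
        simp only [postExp, shrinkage]
        ring
    _ ≤ (1 + |x|) * (C * (τ ^ 2) ^ b) * Real.exp (-(x ^ 2 / 2)) /
          (c * Real.exp (-(x ^ 2 / 2))) := by
        gcongr
    _ = C / c * (τ ^ 2) ^ b * (1 + |x|) := by
        field_simp

lemma postRisk_zero_mul_exp_le_of_log_le (hP : P.Proper) (hb1 : b ≤ 1) (hτ : 0 < τ) (hτ1 : τ ≤ 1)
    (hx : 16 * Real.log (1 / τ) ≤ x ^ 2) :
    postRisk P τ 0 x * Real.exp (-(x ^ 2 / 2)) ≤
      4 * (τ ^ 2) ^ b * Real.exp (-(1 / 8) * x ^ 2) := by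
  have hrisk : postRisk P τ 0 x ≤ 1 + x ^ 2 :=
    (postRisk_zero_le hP hτ).trans (mul_le_of_le_one_right (by positivity)
      ((postExp_mono hP (by fun_prop) continuous_const fun κ hκ => sub_le_self 1 hκ.1).trans
        (postExp_const hP 1).le))
  have hpoly : (1 + x ^ 2) * Real.exp (-(x ^ 2 / 4)) ≤ 4 := by
    rw [Real.exp_neg, mul_inv_le_iff₀ (Real.exp_pos _)]
    linarith [Real.add_one_le_exp (x ^ 2 / 4)]
  have hdecay : Real.exp (-(x ^ 2 / 8)) ≤ (τ ^ 2) ^ b := by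
    refine le_trans ?_
      (Real.rpow_le_rpow_of_exponent_ge (by positivity) (pow_le_one₀ hτ.le hτ1) hb1)
    rw [Real.rpow_one, ← Real.log_le_log_iff (Real.exp_pos _) (by positivity), Real.log_exp,
      Real.log_pow]
    rw [one_div, Real.log_inv] at hx
    push_cast
    linarith
  calc _ ≤ (1 + x ^ 2) * Real.exp (-(x ^ 2 / 2)) := by gcongr
    _ = (1 + x ^ 2) * Real.exp (-(x ^ 2 / 4)) * Real.exp (-(x ^ 2 / 8)) *
          Real.exp (-(1 / 8) * x ^ 2) := by
        rw [mul_assoc, mul_assoc, ← Real.exp_add, ← Real.exp_add]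
        ring_nf
    _ ≤ 4 * (τ ^ 2) ^ b * Real.exp (-(1 / 8) * x ^ 2) := by gcongr

lemma exists_postRisk_zero_mul_gauss_le (hP : P.Proper) (hb : 0 < b) (hb1 : b < 1)
    (hba : b ≤ P.a) : ∃ C > 0, ∀ τ β x : ℝ, 0 < τ → τ ≤ 1 → 0 ≤ β →
      16 * Real.log (1 / τ) ≤ β ^ 2 → postRisk P τ 0 x * gauss x ≤
        (Icc (-β) β).indicator (fun _ => C * (τ ^ 2) ^ b * (1 + β)) x +
          4 * (τ ^ 2) ^ b * Real.exp (-(1 / 8) * x ^ 2) := by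
  obtain ⟨C, hC, hmid⟩ := exists_postRisk_zero_mul_exp_le hP hb hb1 hba
  refine ⟨C, hC, fun τ β x hτ hτ1 hβ0 hβ => ?_⟩
  refine (mul_le_mul_of_nonneg_left (gauss_le_exp x) postRisk_nonneg).trans ?_
  by_cases hx : x ∈ Icc (-β) β
  · rw [indicator_of_mem hx]
    refine le_add_of_le_of_nonneg ((hmid τ x hτ hτ1).trans ?_) (by positivity)
    gcongr
    exact abs_le.2 hx
  · rw [indicator_of_notMem hx, zero_add]
    refine postRisk_zero_mul_exp_le_of_log_le hP hb1.le hτ hτ1 (hβ.trans ?_)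
    rw [← sq_abs x]
    gcongr
    exact (lt_of_not_ge fun h => hx (abs_le.1 h)).le

lemma exists_E1_postRisk_zero_le (hP : P.Proper) (hb : 0 < b) (hb1 : b < 1) (hba : b ≤ P.a) :
    ∃ C > 0, ∀ τ : ℝ, 0 < τ → τ ≤ Real.exp (-1) →
      E1 0 (postRisk P τ 0) ≤ C * ((τ ^ 2) ^ b * Real.log (1 / τ)) := by
  obtain ⟨C, hC, hbound⟩ := exists_postRisk_zero_mul_gauss_le hP hb hb1 hba
  refine ⟨64 * C + 4 * Real.sqrt (Real.pi / (1 / 8)), by positivity, fun τ hτ hτe => ?_⟩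
  have hτ1 : τ ≤ 1 := hτe.trans (Real.exp_le_one_iff.2 (by norm_num))
  have hΛ : 1 ≤ Real.log (1 / τ) := one_le_log_one_div hτ hτe
  obtain ⟨β, hβ1, hβ⟩ : ∃ β : ℝ, 1 ≤ β ∧ β ^ 2 = 16 * Real.log (1 / τ) :=
    ⟨_, Real.one_le_sqrt.2 (by linarith), Real.sq_sqrt (by linarith)⟩
  set D := (τ ^ 2) ^ b
  have hD0 : 0 < D := by positivity
  have hmidint : Integrable ((Icc (-β) β).indicator fun _ => C * D * (1 + β)) :=
    integrable_indicator_iff measurableSet_Icc |>.2 (integrable_const _)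
  have htailint : Integrable fun x : ℝ => 4 * D * Real.exp (-(1 / 8) * x ^ 2) :=
    (integrable_exp_neg_mul_sq (by norm_num)).const_mul _
  calc E1 0 (postRisk P τ 0) ≤ ∫ x, ((Icc (-β) β).indicator (fun _ => C * D * (1 + β)) x +
        4 * D * Real.exp (-(1 / 8) * x ^ 2)) := by
        refine integral_mono ?_ (hmidint.add htailint) fun x => ?_
        · simpa only [gauss_sub_eq_gaussianPDFReal] using
            (integrable_gaussianReal_iff one_ne_zero).1 (integrable_postRisk hP hτ)
        · simpa only [sub_zero] using hbound τ β x hτ hτ1 (by linarith) hβ.ge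
    _ = 2 * β * (1 + β) * C * D + 4 * Real.sqrt (Real.pi / (1 / 8)) * D := by
        rw [integral_add hmidint htailint, integral_indicator measurableSet_Icc, setIntegral_const,
          Real.volume_real_Icc_of_le (by linarith), integral_const_mul, integral_gaussian,
          smul_eq_mul]
        ring
    _ ≤ 64 * Real.log (1 / τ) * C * D +
          4 * Real.sqrt (Real.pi / (1 / 8)) * D * Real.log (1 / τ) := by
        refine add_le_add ?_ (le_mul_of_one_le_right (by positivity) hΛ)
        refine mul_le_mul_of_nonneg_right (mul_le_mul_of_nonneg_right ?_ hC.le) hD0.le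
        nlinarith
    _ = _ := by ring

end CoordinateRisk

section Contraction

variable {P : Prior} {τ r : ℝ} {n : ℕ} {c x : Fin n → ℝ}

lemma postProb_nonneg (A : Set (Fin n → ℝ)) : 0 ≤ postProb P τ x A :=
  div_nonneg
    (integral_nonneg fun θ => Finset.prod_nonneg fun i _ => postw_nonneg P τ (x i) (θ i))
    (integral_nonneg fun θ => Finset.prod_nonneg fun i _ => postw_nonneg P τ (x i) (θ i))

-- An improper posterior has infinite mass, so that its `postProb` is the junk value `· / 0 = 0`.
lemma postProb_eq_zero_of_not_proper (hP : ¬ P.Proper) (hτ : 0 < τ) (hn : 0 < n)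
    (A : Set (Fin n → ℝ)) : postProb P τ x A = 0 := by
  rw [postProb, integral_fintype_prod_volume_eq_prod fun i => postw P τ (x i),
    Finset.prod_eq_zero (Finset.mem_univ (⟨0, hn⟩ : Fin n))
      (integral_postw_eq_zero_of_not_proper hP hτ), div_zero]

lemma postProb_sum_sq_le (hP : P.Proper) (hτ : 0 < τ) (hr : 0 < r) :
    postProb P τ x {θ | r < ∑ i, (θ i - c i) ^ 2} ≤ r⁻¹ * ∑ i, postRisk P τ (c i) (x i) := by
  have hZ (i : Fin n) : 0 < ∫ θ, postw P τ (x i) θ := by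
    rw [integral_postw hP hτ]
    exact mul_pos P.K_pos (integral_wt_pos hP)
  set f : Fin n → ℝ → ℝ := fun i θ => postw P τ (x i) θ / ∫ θ, postw P τ (x i) θ with hf
  have hfint (i : Fin n) : Integrable (f i) := (integrable_postw hP hτ).div_const _
  have hf1 (i : Fin n) : ∫ θ, f i θ = 1 := by
    rw [integral_div, div_self (hZ i).ne']
  have hf0 : 0 ≤ fun θ : Fin n → ℝ => ∏ i, f i (θ i) := fun θ =>
    Finset.prod_nonneg fun i _ => div_nonneg (postw_nonneg P τ _ _) (hZ i).le
  have hsqint (i : Fin n) : Integrable fun θ => (θ - c i) ^ 2 * f i θ := by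
    simpa only [hf, mul_div_assoc] using
      (integrable_sub_sq_mul_postw (x := x i) (c := c i) hP hτ).div_const
        (∫ θ, postw P τ (x i) θ)
  calc postProb P τ x {θ | r < ∑ i, (θ i - c i) ^ 2}
      = ∫ θ in {θ : Fin n → ℝ | r < ∑ i, (θ i - c i) ^ 2}, ∏ i, f i (θ i) := by
        simp only [hf, Finset.prod_div_distrib]
        rw [postProb, integral_div, integral_fintype_prod_volume_eq_prod fun i => postw P τ (x i)]
    _ ≤ r⁻¹ * ∫ θ : Fin n → ℝ, (∑ i, (θ i - c i) ^ 2) * ∏ i, f i (θ i) :=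
        setIntegral_lt_le_inv_mul_integral_mul
          (fun θ => Finset.sum_nonneg fun i _ => sq_nonneg _)
          (Finset.measurable_fun_sum _ fun i _ =>
            ((measurable_pi_apply i).sub_const _).pow_const 2) hf0
          (Integrable.fintype_prod hfint) (integrable_sum_mul_prod hfint hsqint) hr
    _ = r⁻¹ * ∑ i, postRisk P τ (c i) (x i) := by
        rw [volume_pi, integral_sum_mul_prod hfint hf1 hsqint]
        simp only [hf, postRisk, ← mul_div_assoc, integral_div]

lemma EN_postProb_sum_sq_le (hP : P.Proper) (hτ : 0 < τ) (hr : 0 < r) :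
    EN n c (fun x => postProb P τ x {θ | r < ∑ i, (θ i - c i) ^ 2}) ≤
      r⁻¹ * ∑ i, E1 (c i) (postRisk P τ (c i)) := by
  have hgauss (i : Fin n) : (fun x => gauss (x - c i)) = gaussianPDFReal (c i) 1 :=
    funext (gauss_sub_eq_gaussianPDFReal (c i))
  have hint (i : Fin n) : Integrable fun x => gauss (x - c i) :=
    hgauss i ▸ integrable_gaussianPDFReal (c i) 1
  have hint1 (i : Fin n) : ∫ x, gauss (x - c i) = 1 := by
    rw [hgauss i, integral_gaussianPDFReal_eq_one (c i) one_ne_zero]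
  have hrisk (i : Fin n) : Integrable fun x => postRisk P τ (c i) x * gauss (x - c i) := by
    simpa only [gauss_sub_eq_gaussianPDFReal] using
      (integrable_gaussianReal_iff one_ne_zero).1 (integrable_postRisk (c := c i) hP hτ)
  have hgauss0 (x : Fin n → ℝ) : 0 ≤ ∏ i, gauss (x i - c i) := by
    unfold gauss
    positivity
  calc EN n c (fun x => postProb P τ x {θ | r < ∑ i, (θ i - c i) ^ 2})
      ≤ ∫ x : Fin n → ℝ, r⁻¹ * ((∑ i, postRisk P τ (c i) (x i)) * ∏ i, gauss (x i - c i)) := by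
        refine integral_mono_of_nonneg
          (ae_of_all _ fun x => mul_nonneg (postProb_nonneg _) (hgauss0 x))
          ((integrable_sum_mul_prod hint hrisk).const_mul _) (ae_of_all _ fun x => ?_)
        dsimp only
        rw [← mul_assoc]
        exact mul_le_mul_of_nonneg_right (postProb_sum_sq_le hP hτ hr) (hgauss0 x)
    _ = r⁻¹ * ∑ i, E1 (c i) (postRisk P τ (c i)) := by
        rw [integral_const_mul, volume_pi, integral_sum_mul_prod hint hint1 hrisk]
        rfl

lemma exists_sum_E1_postRisk_le {b : ℝ} (hP : P.Proper) (hb : 0 < b) (hb1 : b < 1)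
    (hba : b ≤ P.a) : ∃ C > 0, ∀ (τ : ℝ) (n p : ℕ) (c : Fin n → ℝ), 0 < τ → τ ≤ Real.exp (-1) →
      c ∈ nearlyBlack n p →
        ∑ i, E1 (c i) (postRisk P τ (c i)) ≤ C * ((p + n * (τ ^ 2) ^ b) * Real.log (1 / τ)) := by
  obtain ⟨C₁, hC₁, hsignal⟩ := exists_E1_postRisk_le hP
  obtain ⟨C₂, hC₂, hnoise⟩ := exists_E1_postRisk_zero_le hP hb hb1 hba
  refine ⟨C₁ + C₂, by positivity, fun τ n p c hτ hτe hc => ?_⟩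
  set Λ := Real.log (1 / τ)
  have hΛ : 0 < Λ := one_pos.trans_le (one_le_log_one_div hτ hτe)
  have hcard : ((Finset.univ.filter fun i => c i ≠ 0).card : ℝ) ≤ p := Nat.cast_le.2 hc
  calc ∑ i, E1 (c i) (postRisk P τ (c i))
      ≤ ∑ i, ((if c i ≠ 0 then C₁ * Λ else 0) + C₂ * ((τ ^ 2) ^ b * Λ)) := by
        refine Finset.sum_le_sum fun i _ => ?_
        split_ifs with hi
        · exact le_add_of_le_of_nonneg (hsignal τ (c i) hτ hτe) (by positivity)
        · rw [not_not.1 hi, zero_add]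
          exact hnoise τ hτ hτe
    _ = (Finset.univ.filter fun i => c i ≠ 0).card * (C₁ * Λ) + n * (C₂ * ((τ ^ 2) ^ b * Λ)) := by
        rw [Finset.sum_add_distrib, ← Finset.sum_filter, Finset.sum_const, Finset.sum_const,
          nsmul_eq_mul, nsmul_eq_mul, Finset.card_univ, Fintype.card_fin]
    _ ≤ p * (C₁ * Λ) + n * (C₂ * ((τ ^ 2) ^ b * Λ)) := by gcongr
    _ ≤ (C₁ + C₂) * ((p + n * (τ ^ 2) ^ b) * Λ) := by
        have hcross : 0 ≤ C₂ * (p * Λ) + C₁ * (n * (τ ^ 2) ^ b * Λ) := by positivity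
        linarith

lemma exists_EN_postProb_sum_sq_le_of_proper {α : ℝ} (hP : P.Proper) (hα : 1 / 2 < α)
    (haα : 1 ≤ 2 * P.a * α) :
    ∃ C > 0, ∀ (n p : ℕ) (M : ℝ) (c : Fin n → ℝ), 0 < p → (p : ℝ) ≤ Real.exp (-2) * n → 0 < M →
      c ∈ nearlyBlack n p →
        EN n c (fun x => postProb P ((p / n : ℝ) ^ α) x
          {θ | M * p * Real.log (n / p) < ∑ i, (θ i - c i) ^ 2}) ≤ C / M := by
  obtain ⟨C, hC, hsum⟩ := exists_sum_E1_postRisk_le (b := 1 / (2 * α)) hP (by positivity)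
    (by rw [div_lt_one (by positivity)]; linarith)
    (by rw [div_le_iff₀ (by positivity)]; linarith)
  refine ⟨2 * C * α, by positivity, fun n p M c hp hpn hM hc => ?_⟩
  have hp0 : (0 : ℝ) < p := Nat.cast_pos.2 hp
  have hn0 : (0 : ℝ) < n := pos_of_mul_pos_right (hp0.trans_le hpn) (Real.exp_pos _).le
  have hτ : 0 < (p / n : ℝ) ^ α := by positivity
  have hτe : (p / n : ℝ) ^ α ≤ Real.exp (-1) :=
    rpow_le_exp_neg_one (by positivity) ((div_le_iff₀ hn0).2 hpn) hα.le
  have hlog : Real.log (1 / (p / n : ℝ) ^ α) = α * Real.log (n / p) := by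
    rw [one_div, ← Real.inv_rpow (by positivity), inv_div, Real.log_rpow (by positivity)]
  have hl : 0 < Real.log (n / p) := by
    refine pos_of_mul_pos_right (a := α) ?_ (by positivity)
    rw [← hlog]
    exact one_pos.trans_le (one_le_log_one_div hτ hτe)
  calc _ ≤ (M * p * Real.log (n / p))⁻¹ *
        ∑ i, E1 (c i) (postRisk P ((p / n : ℝ) ^ α) (c i)) :=
        EN_postProb_sum_sq_le hP hτ (by positivity)
    _ ≤ (M * p * Real.log (n / p))⁻¹ * (C * ((p + n * (p / n)) * (α * Real.log (n / p)))) := by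
        have hbound := hsum _ n p c hτ hτe hc
        rw [hlog, sq_rpow_rpow_one_div (by positivity) (by positivity)] at hbound
        gcongr
    _ = 2 * C * α / M := by
        field_simp
        ring

lemma exists_EN_postProb_sum_sq_le (P : Prior) {α : ℝ} (hα : 1 / 2 < α) (haα : 1 ≤ 2 * P.a * α) :
    ∃ C > 0, ∀ (n p : ℕ) (M : ℝ) (c : Fin n → ℝ), 0 < p → (p : ℝ) ≤ Real.exp (-2) * n → 0 < M →
      c ∈ nearlyBlack n p →
        EN n c (fun x => postProb P ((p / n : ℝ) ^ α) x
          {θ | M * p * Real.log (n / p) < ∑ i, (θ i - c i) ^ 2}) ≤ C / M := by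
  by_cases hP : P.Proper
  · exact exists_EN_postProb_sum_sq_le_of_proper hP hα haα
  · refine ⟨1, one_pos, fun n p M c hp hpn hM _ => ?_⟩
    have hp0 : (0 : ℝ) < p := Nat.cast_pos.2 hp
    have hn0 : (0 : ℝ) < n := pos_of_mul_pos_right (hp0.trans_le hpn) (Real.exp_pos _).le
    have hτ : 0 < (p / n : ℝ) ^ α := by positivity
    simp only [EN, postProb_eq_zero_of_not_proper hP hτ (Nat.cast_pos.1 hn0), zero_mul,
      integral_zero]
    positivity

end Contraction

end OneGroup

theorem posterior_contraction_around_truth_general (P : Prior) (p : ℕ → ℕ)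
    (hp : ∀ᶠ n in atTop, 0 < p n)
    (hpo : (fun n => (p n : ℝ)) =o[atTop] (fun n => (n : ℝ)))
    (α : ℝ) (hα : 1 / 2 < α) (haα : 1 ≤ 2 * P.a * α)
    (Mseq : ℕ → ℝ) (hM : Tendsto Mseq atTop atTop) :
    ∀ ε > (0 : ℝ), ∃ N : ℕ, ∀ n ≥ N, ∀ θ₀ ∈ nearlyBlack n (p n),
      EN n θ₀ (fun x => postProb P (((p n : ℝ) / (n : ℝ)) ^ α) x
        {θ : Fin n → ℝ |
          Mseq n * (p n : ℝ) * Real.log ((n : ℝ) / (p n : ℝ)) <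
            ∑ i, (θ i - θ₀ i) ^ 2}) < ε := by
  intro ε hε
  obtain ⟨C, hC, hbound⟩ := exists_EN_postProb_sum_sq_le P hα haα
  have hsparse : ∀ᶠ n : ℕ in atTop, (p n : ℝ) ≤ Real.exp (-2) * n := by
    simpa only [Real.norm_natCast] using hpo.def (Real.exp_pos (-2))
  refine eventually_atTop.1 ?_
  filter_upwards [hp, hsparse, hM.eventually_gt_atTop (C / ε)] with n hpn hsp hMn θ₀ hθ₀
  have hM0 : 0 < Mseq n := (div_pos hC hε).trans hMn
  exact (hbound n (p n) (Mseq n) θ₀ hpn hsp hM0 hθ₀).trans_lt ((div_lt_comm₀ hε hM0).1 hMn)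

/-- Theorem 3.3: with `τ_n = (p_n/n)^α`, `α ≥ 1`, the posterior
distribution contracts around the true mean vector at the minimax rate. -/
theorem posterior_contraction_around_truth (P : Prior) (ha : 1/2 ≤ P.a) (ha' : P.a < 1)
    (p : ℕ → ℕ)
    (hp : Tendsto p atTop atTop)
    (hpo : (fun n => (p n : ℝ)) =o[atTop] (fun n => (n : ℝ)))
    (α : ℝ) (hα : 1 ≤ α)
    (Mseq : ℕ → ℝ) (hM : Tendsto Mseq atTop atTop) :
    ∀ ε > (0:ℝ), ∃ N : ℕ, ∀ n ≥ N, ∀ θ₀ ∈ nearlyBlack n (p n),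
      EN n θ₀ (fun x => postProb P (((p n : ℝ) / (n : ℝ)) ^ α) x
        {θ : Fin n → ℝ |
          Mseq n * (p n : ℝ) * Real.log ((n : ℝ) / (p n : ℝ)) <
            ∑ i, (θ i - θ₀ i) ^ 2}) < ε :=
  posterior_contraction_around_truth_general P p (hp.eventually_gt_atTop 0) hpo α (by linarith)
    (by nlinarith) Mseq hM
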